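/- Let A be an infinite-dimensional simple AF C*-algebra, and let F be a unital C*-algebra admitting an increasing sequence (S_k) of unital *-subalgebras with each S_k *-isomorphic to M_{2^k}(ℂ) and with union dense in F. Then A is isomorphic as a Banach space either to K, the C*-algebra of compact operators on ℓ²(ℕ, ℂ), or to F. -/

import Mathlib

/-!
Statement 5 (Corollary 1.4 of the paper).

An infinite-dimensional simple AF C*-algebra is isomorphic as a Banach space
either to the compact operators `K` on `ℓ²(ℕ, ℂ)` or to the Fermion algebra.
-/

noncomputable section

local notation "H" => lp (fun _ : ℕ => ℂ) 2

/-- The compact operators on `ℓ²(ℕ, ℂ)`, as a subspace of the bounded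
operators with the operator norm. -/
def CompactOperators : Submodule ℂ (H →L[ℂ] H) where
  carrier := {T | IsCompactOperator T}
  add_mem' := fun hS hT => hS.add hT
  zero_mem' := isCompactOperator_zero
  smul_mem' := fun c _T hT => hT.smul c

/-- `S` is an AF presentation of the C*-algebra `A`: an increasing sequence of
finite-dimensional *-subalgebras whose union is dense. -/
def IsAFPresentation (A : Type*) [NonUnitalCStarAlgebra A]
    (S : ℕ → NonUnitalStarSubalgebra ℂ A) : Prop :=
  Monotone S ∧ (∀ k, FiniteDimensional ℂ (S k)) ∧ Dense (⋃ k, (S k : Set A))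

/-- A C*-algebra is simple if its only closed two-sided ideals are `{0}` and
the whole algebra. -/
def IsSimpleCStarAlgebra (A : Type*) [NonUnitalCStarAlgebra A] : Prop :=
  ∀ I : TwoSidedIdeal A, IsClosed (I : Set A) → I = ⊥ ∨ I = ⊤

/-!
If `A` has a minimal projection `p`, the GNS representation of the pure state `x ↦ c`, where
`p * x * p = c • p`, maps `a * p * star b` to a rank one operator, and simplicity makes it an
isomorphism of `A` onto the compact operators of a separable Hilbert space.

Otherwise primeness of `A` puts equivalent orthogonal projections, in any number, below every
minimal projection of every subalgebra of an AF presentation. This leaves room in `A` for any AF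
algebra `B 0 ≤ B 1 ≤ ⋯`: matrix units of `B k` are sent to matrix units below a single minimal
projection, and the part of the new map orthogonal to the new matrix units is filled with the
old map, so that successive maps agree. The resulting contraction need not be multiplicative,
but compressing back to the matrix units is a left inverse of it. As the Fermion algebra has the
same property, each of the two algebras is complemented in the other and contains its `c₀`-sum
complementably, and Pełczyński's decomposition method applies.
-/

universe v

open scoped ComplexStarModule

section MinimalProjection

theorem spectrum_finite {𝕜 R : Type*} [Field 𝕜] [Ring R] [Algebra 𝕜 R] [FiniteDimensional 𝕜 R]
    (a : R) : (spectrum 𝕜 a).Finite := by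
  nontriviality R
  have ha : IsIntegral 𝕜 a := Algebra.IsIntegral.isIntegral a
  refine ((minpoly 𝕜 a).rootSet_finite 𝕜).subset fun z hz => ?_
  have hroot := spectrum.subset_polynomial_aeval a (minpoly 𝕜 a) ⟨z, hz, rfl⟩
  rw [Polynomial.mem_rootSet]
  refine ⟨minpoly.ne_zero ha, ?_⟩
  rw [minpoly.aeval, spectrum.zero_eq] at hroot
  simpa [Polynomial.aeval_def] using hroot

theorem quasispectrum_finite {𝕜 R : Type*} [Field 𝕜] [NonUnitalRing R] [Module 𝕜 R]
    [IsScalarTower 𝕜 R R] [SMulCommClass 𝕜 R R] [FiniteDimensional 𝕜 R] (a : R) :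
    (quasispectrum 𝕜 a).Finite := by
  have : FiniteDimensional 𝕜 (Unitization 𝕜 R) :=
    Module.Finite.equiv ((Unitization.addEquiv 𝕜 R).symm.toLinearEquiv
      fun _ _ => rfl : (𝕜 × R) ≃ₗ[𝕜] Unitization 𝕜 R)
  rw [Unitization.quasispectrum_eq_spectrum_inr 𝕜 a]
  exact spectrum_finite _

/-- Apply the functional calculus to the indicator function of `{t}`. -/
theorem exists_spectral_projection {R : Type*} [NonUnitalCStarAlgebra R]
    [FiniteDimensional ℂ R] {h : R} (hh : IsSelfAdjoint h) (h0 : h ≠ 0) :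
    ∃ p : R, IsStarProjection p ∧ p ≠ 0 ∧ ∃ t : ℂ, t ≠ 0 ∧ h * p = t • p := by
  have := hh.isStarNormal
  obtain ⟨t, ht, ht0⟩ : ∃ t ∈ quasispectrum ℂ h, t ≠ 0 := by
    by_contra! hcon
    apply h0
    rw [← cfcₙ_id ℂ h, cfcₙ_congr (g := fun _ => 0) (fun x hx => by simpa using hcon x hx)]
    simp
  let f : ℂ → ℂ := fun z => if z = t then 1 else 0
  have hf0 : f 0 = 0 := by simp [f, ht0.symm]
  have hfc : ContinuousOn f (quasispectrum ℂ h) := by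
    have := (quasispectrum_finite (𝕜 := ℂ) h).to_subtype
    rw [continuousOn_iff_continuous_domRestrict]
    exact continuous_of_discreteTopology
  refine ⟨cfcₙ f h, ⟨?_, ?_⟩, fun e => ?_, t, ht0, ?_⟩
  · rw [IsIdempotentElem, ← cfcₙ_mul f f h]
    congr 1
    ext z; simp [f]
  · rw [IsSelfAdjoint, ← cfcₙ_star]
    congr 1
    ext z; simp [f]
  · rw [← cfcₙ_zero ℂ h] at e
    simpa [f] using (cfcₙ_eq_cfcₙ_iff_eqOn (a := h) (f := f) (g := 0)).1 e ht
  · nth_rewrite 1 [← cfcₙ_id ℂ h]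
    rw [← cfcₙ_mul id f h, ← cfcₙ_smul t f h]
    congr 1
    ext z
    by_cases hz : z = t <;> simp [f, hz]

variable {X : Type*} [NonUnitalCStarAlgebra X]

/-- A minimal projection of the star subalgebra `B`: a nonzero projection `q` of `B` whose corner
`q B q` is one-dimensional. -/
structure IsMinimalProjection (B : NonUnitalStarSubalgebra ℂ X) (q : X) : Prop
    extends IsStarProjection q where
  mem : q ∈ B
  ne_zero : q ≠ 0
  exists_smul : ∀ x ∈ B, ∃ c : ℂ, q * x * q = c • q

/-- The left ideal `B q` of `B` generated by a projection `q`. -/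
def leftIdeal (B : NonUnitalStarSubalgebra ℂ X) (q : X) : Submodule ℂ X :=
  B.toNonUnitalSubalgebra.toSubmodule ⊓ LinearMap.eqLocus (LinearMap.mulRight ℂ q) LinearMap.id

variable {B : NonUnitalStarSubalgebra ℂ X} {p p' q : X}

theorem mem_leftIdeal {x : X} : x ∈ leftIdeal B q ↔ x ∈ B ∧ x * q = x := Iff.rfl

theorem isClosed_of_finiteDimensional (B : NonUnitalStarSubalgebra ℂ X)
    [FiniteDimensional ℂ B] : IsClosed (B : Set X) :=
  Submodule.closed_of_finiteDimensional B.toNonUnitalSubalgebra.toSubmodule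

theorem exists_spectral_projection_mem [FiniteDimensional ℂ B] {h : X} (hB : h ∈ B)
    (hh : IsSelfAdjoint h) (h0 : h ≠ 0) :
    ∃ p ∈ B, IsStarProjection p ∧ p ≠ 0 ∧ ∃ t : ℂ, t ≠ 0 ∧ h * p = t • p := by
  have : IsClosed (B : Set X) := isClosed_of_finiteDimensional B
  obtain ⟨p, hp, hp0, t, ht, htp⟩ := exists_spectral_projection (R := B) (h := ⟨h, hB⟩)
    (Subtype.ext hh) fun e => h0 (congrArg Subtype.val e)
  exact ⟨p, p.2, hp.map (NonUnitalStarSubalgebraClass.subtype B), fun e => hp0 (Subtype.ext e),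
    t, ht, congrArg Subtype.val htp⟩

theorem exists_isSelfAdjoint_forall_ne_smul (hq : IsStarProjection q) (hqB : q ∈ B) (hq0 : q ≠ 0)
    (hmin : ¬ IsMinimalProjection B q) :
    ∃ h ∈ B, IsSelfAdjoint h ∧ ∀ c : ℂ, q * h * q ≠ c • q := by
  by_contra! hcon
  refine hmin ⟨hq, hqB, hq0, fun x hx => ?_⟩
  have hmem : (ℜ x : X) ∈ B ∧ (ℑ x : X) ∈ B := by
    simp only [realPart_apply_coe, imaginaryPart_apply_coe, ← Complex.coe_smul]
    exact ⟨SMulMemClass.smul_mem _ (add_mem hx (star_mem hx)),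
      SMulMemClass.smul_mem _ (SMulMemClass.smul_mem _ (sub_mem hx (star_mem hx)))⟩
  obtain ⟨a, ha⟩ := hcon _ hmem.1 (ℜ x).2
  obtain ⟨b, hb⟩ := hcon _ hmem.2 (ℑ x).2
  refine ⟨a + Complex.I * b, ?_⟩
  rw [← realPart_add_I_smul_imaginaryPart x, mul_add, add_mul, ha, mul_smul_comm, smul_mul_assoc,
    hb, smul_smul, add_smul]

theorem mul_eq_left_of_mul_eq_right (hp : IsSelfAdjoint p) (hq : IsSelfAdjoint q)
    (h : q * p = p) : p * q = p := by
  simpa [hp.star_eq, hq.star_eq] using congrArg star h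

theorem exists_proper_subprojection [FiniteDimensional ℂ B] (hq : IsStarProjection q)
    (hqB : q ∈ B) (hq0 : q ≠ 0) (hmin : ¬ IsMinimalProjection B q) :
    ∃ p ∈ B, IsStarProjection p ∧ p ≠ 0 ∧ p ≠ q ∧ q * p = p := by
  obtain ⟨h, hB, hh, hc⟩ := exists_isSelfAdjoint_forall_ne_smul hq hqB hq0 hmin
  have hqhq : q * (q * h * q) = q * h * q := by simp only [← mul_assoc, hq.isIdempotentElem.eq]
  obtain ⟨p, hpB, hp, hp0, t, ht, htp⟩ := exists_spectral_projection_mem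
    (h := q * h * q) (mul_mem (mul_mem hqB hB) hqB)
    (by simpa [hq.isSelfAdjoint.star_eq] using hh.conjugate q) (by simpa using hc 0)
  refine ⟨p, hpB, hp, hp0, ?_, ?_⟩
  · rintro rfl
    rw [mul_assoc, hp.isIdempotentElem.eq] at htp
    exact hc t htp
  · have hp_eq : p = t⁻¹ • (q * h * q * p) := by rw [htp, inv_smul_smul₀ ht]
    rw [hp_eq, mul_smul_comm, ← mul_assoc, hqhq]

theorem leftIdeal_lt_leftIdeal (hq : IsStarProjection q) (hqB : q ∈ B) (hp : IsStarProjection p)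
    (hqp : q * p = p) (hne : p ≠ q) : leftIdeal B p < leftIdeal B q := by
  have hpq := mul_eq_left_of_mul_eq_right hp.isSelfAdjoint hq.isSelfAdjoint hqp
  refine lt_of_le_of_ne (fun b hb => ⟨hb.1, ?_⟩) fun e => hne ?_
  · have hbp : b * p = b := hb.2
    change b * q = b
    rw [← hbp, mul_assoc, hpq]
  · have hq_mem : q ∈ leftIdeal B p := e ▸ mem_leftIdeal.2 ⟨hqB, hq.isIdempotentElem⟩
    exact hqp.symm.trans hq_mem.2

/-- A decomposition of the projection `q` into pairwise orthogonal minimal projections of `B`. -/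
structure IsMinimalDecomposition (B : NonUnitalStarSubalgebra ℂ X) (s : Finset X) (q : X) :
    Prop where
  minimal : ∀ p ∈ s, IsMinimalProjection B p
  orthogonal : (s : Set X).Pairwise fun p p' => p * p' = 0
  sum_eq : ∑ p ∈ s, p = q

namespace IsMinimalDecomposition

variable {s s' : Finset X}

theorem mul_right (h : IsMinimalDecomposition B s q) (hp : p ∈ s) : p * q = p := by
  rw [← h.sum_eq, Finset.mul_sum, Finset.sum_eq_single_of_mem p hp fun r hr hrp =>
    h.orthogonal hp hr hrp.symm, (h.minimal p hp).isIdempotentElem.eq]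

theorem mul_left (h : IsMinimalDecomposition B s q) (hp : p ∈ s) : q * p = p := by
  rw [← h.sum_eq, Finset.sum_mul, Finset.sum_eq_single_of_mem p hp fun r hr hrp =>
    h.orthogonal hr hp hrp, (h.minimal p hp).isIdempotentElem.eq]

theorem union [DecidableEq X] (h : IsMinimalDecomposition B s p)
    (h' : IsMinimalDecomposition B s' p') (hpp' : p * p' = 0) :
    IsMinimalDecomposition B (s ∪ s') (p + p') := by
  have hss' : ∀ a ∈ s, ∀ b ∈ s', a * b = 0 := fun a ha b hb => by
    rw [← h.mul_right ha, ← h'.mul_left hb, mul_assoc, ← mul_assoc p, hpp', zero_mul, mul_zero]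
  have hs's : ∀ a ∈ s, ∀ b ∈ s', b * a = 0 := fun a ha b hb => by
    simpa [(h.minimal a ha).isSelfAdjoint.star_eq, (h'.minimal b hb).isSelfAdjoint.star_eq]
      using congrArg star (hss' a ha b hb)
  have hdisj : Disjoint s s' := Finset.disjoint_left.2 fun a ha ha' =>
    (h.minimal a ha).ne_zero ((h.minimal a ha).isIdempotentElem.eq.symm.trans (hss' a ha a ha'))
  refine ⟨fun a ha => (Finset.mem_union.1 ha).elim (h.minimal a) (h'.minimal a), ?_, ?_⟩
  · rw [Finset.coe_union]
    exact (Set.pairwise_union).2 ⟨h.orthogonal, h'.orthogonal,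
      fun a ha b hb _ => ⟨hss' a ha b hb, hs's a ha b hb⟩⟩
  · rw [Finset.sum_union hdisj, h.sum_eq, h'.sum_eq]

end IsMinimalDecomposition

theorem exists_isMinimalDecomposition [hB : FiniteDimensional ℂ B] (hq : IsStarProjection q)
    (hqB : q ∈ B) : ∃ s : Finset X, IsMinimalDecomposition B s q := by
  classical
  induction hn : Module.finrank ℂ (leftIdeal B q) using Nat.strong_induction_on generalizing q with
  | _ n ih =>
  subst hn
  by_cases hq0 : q = 0
  · exact ⟨∅, by simp, by simp, by simp [hq0]⟩
  by_cases hmin : IsMinimalProjection B q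
  · exact ⟨{q}, by simpa using hmin, by simp, by simp⟩
  obtain ⟨p, hpB, hp, hp0, hne, hqp⟩ := exists_proper_subprojection hq hqB hq0 hmin
  have hpq := mul_eq_left_of_mul_eq_right hp.isSelfAdjoint hq.isSelfAdjoint hqp
  have hr : IsStarProjection (q - p) := by
    refine ⟨?_, hq.isSelfAdjoint.sub hp.isSelfAdjoint⟩
    rw [IsIdempotentElem, sub_mul, mul_sub, mul_sub, hq.isIdempotentElem.eq, hqp, hpq,
      hp.isIdempotentElem.eq, sub_self, sub_zero]
  have hqr : q * (q - p) = q - p := by rw [mul_sub, hq.isIdempotentElem.eq, hqp]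
  have : FiniteDimensional ℂ B.toNonUnitalSubalgebra.toSubmodule := hB
  have : FiniteDimensional ℂ (leftIdeal B q) := Submodule.finiteDimensional_inf_left _ _
  obtain ⟨s, hs⟩ := ih _ (Submodule.finrank_lt_finrank_of_lt
    (leftIdeal_lt_leftIdeal hq hqB hp hqp hne)) hp hpB rfl
  obtain ⟨s', hs'⟩ := ih _ (Submodule.finrank_lt_finrank_of_lt
    (leftIdeal_lt_leftIdeal hq hqB hr hqr (by simpa using hp0))) hr (sub_mem hqB hpB) rfl
  refine ⟨s ∪ s', ?_⟩
  rw [← add_sub_cancel p q]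
  exact hs.union hs' (by rw [mul_sub, hpq, hp.isIdempotentElem.eq, sub_self])

theorem exists_isMinimalProjection [FiniteDimensional ℂ B] {x : X} (hx : x ∈ B) (hx0 : x ≠ 0) :
    ∃ q, IsMinimalProjection B q := by
  obtain ⟨p, hpB, hp, hp0, -⟩ := exists_spectral_projection_mem (mul_mem (star_mem hx) hx)
    (.star_mul_self x) (CStarRing.star_mul_self_ne_zero_iff x |>.2 hx0)
  obtain ⟨s, hs⟩ := exists_isMinimalDecomposition hp hpB
  obtain ⟨q, hq⟩ : s.Nonempty := Finset.nonempty_iff_ne_empty.2 fun h => hp0 <| by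
    rw [← hs.sum_eq, h, Finset.sum_empty]
  exact ⟨q, hs.minimal q hq⟩

theorem exists_nonneg_of_star_mul_self_eq_smul (hq : IsStarProjection q) (hq0 : q ≠ 0) {y : X}
    {c : ℂ} (h : star y * y = c • q) : ∃ r : ℝ, 0 ≤ r ∧ c = r := by
  have hreal : star c = c := by
    have hstar := (IsSelfAdjoint.star_mul_self y).star_eq
    rw [h, star_smul, hq.isSelfAdjoint.star_eq] at hstar
    exact smul_left_injective ℂ hq0 hstar
  obtain ⟨r, rfl⟩ := Complex.conj_eq_iff_real.1 hreal
  refine ⟨r, le_of_not_gt fun hr => ?_, rfl⟩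
  let _ := CStarAlgebra.spectralOrder X
  let _ := CStarAlgebra.spectralOrderedRing X
  have hnonpos : star y * y ≤ 0 := by
    rw [h, Complex.coe_smul]
    exact smul_nonpos_of_nonpos_of_nonneg hr.le hq.nonneg
  have hzero := le_antisymm hnonpos (star_mul_self_nonneg y)
  rw [h, smul_eq_zero] at hzero
  exact hzero.elim (by exact_mod_cast hr.ne) hq0

theorem mul_eq_self_of_star_mul_self_eq {w : X} (hp : IsStarProjection p) (h : star w * w = p) :
    w * p = w := by
  refine sub_eq_zero.1 ((CStarRing.star_mul_self_eq_zero_iff _).1 ?_)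
  rw [star_sub, star_mul, hp.isSelfAdjoint.star_eq, sub_mul, mul_sub, mul_sub, mul_assoc p,
    ← mul_assoc _ w, h, mul_assoc p, h]
  simp only [hp.isIdempotentElem.eq, sub_self]

/-- The polar decomposition of `p x p'`, a multiple of a partial isometry from `p'` to `p`. -/
theorem IsMinimalProjection.exists_partialIsometry (hp : IsMinimalProjection B p)
    (hp' : IsMinimalProjection B p') {x : X} (hx : x ∈ B) (h : p * x * p' ≠ 0) :
    ∃ w ∈ B, star w * w = p' ∧ w * star w = p := by
  set y := p * x * p' with hy
  have hyB : y ∈ B := mul_mem (mul_mem hp.mem hx) hp'.mem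
  have hpy : p * y = y := by simp only [hy, ← mul_assoc, hp.isIdempotentElem.eq]
  have hyp : y * p' = y := by rw [hy, mul_assoc, hp'.isIdempotentElem.eq]
  have hpy' : star y * p = star y := by
    simpa [hp.isSelfAdjoint.star_eq] using congrArg star hpy
  have hyp' : p' * star y = star y := by
    simpa [hp'.isSelfAdjoint.star_eq] using congrArg star hyp
  obtain ⟨c, hc⟩ := hp'.exists_smul (star y * y) (mul_mem (star_mem hyB) hyB)
  rw [← mul_assoc, hyp', mul_assoc, hyp] at hc
  obtain ⟨d, hd⟩ := hp.exists_smul (y * star y) (mul_mem hyB (star_mem hyB))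
  rw [← mul_assoc, hpy, mul_assoc, hpy'] at hd
  have hcd : c = d := smul_left_injective ℂ h <| by
    calc c • y = y * (star y * y) := by rw [hc, mul_smul_comm, hyp]
      _ = d • y := by rw [← mul_assoc, hd, smul_mul_assoc, hpy]
  obtain ⟨r, hr, rfl⟩ := exists_nonneg_of_star_mul_self_eq_smul hp'.toIsStarProjection
    hp'.ne_zero hc
  have hr0 : (r : ℂ) ≠ 0 := by
    rintro h0
    rw [h0, zero_smul, CStarRing.star_mul_self_eq_zero_iff] at hc
    exact h hc
  have hscale : star ((√r : ℂ)⁻¹) * (√r : ℂ)⁻¹ * r = 1 := by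
    rw [star_inv₀, Complex.star_def, Complex.conj_ofReal, ← mul_inv, ← Complex.ofReal_mul,
      Real.mul_self_sqrt hr, inv_mul_cancel₀ hr0]
  refine ⟨(√r : ℂ)⁻¹ • y, SMulMemClass.smul_mem _ hyB, ?_, ?_⟩
  · rw [star_smul, smul_mul_smul_comm, hc, smul_smul, hscale, one_smul]
  · rw [star_smul, smul_mul_smul_comm, hd, ← hcd, smul_smul, mul_comm (_⁻¹), hscale, one_smul]

/-- Equivalence, in the sense of Murray and von Neumann, of the members of a family of projections
of `B`: two of them are equivalent if a partial isometry in `B` connects them. -/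
def murrayVonNeumannSetoid {ι : Type*} {e : ι → X} (he : ∀ i, IsStarProjection (e i))
    (heB : ∀ i, e i ∈ B) : Setoid ι where
  r i j := ∃ w ∈ B, star w * w = e j ∧ w * star w = e i
  iseqv := by
    refine ⟨fun i => ⟨e i, heB i, ?_, ?_⟩, ?_, ?_⟩
    · rw [(he i).isSelfAdjoint.star_eq, (he i).isIdempotentElem.eq]
    · rw [(he i).isSelfAdjoint.star_eq, (he i).isIdempotentElem.eq]
    · rintro i j ⟨w, hw, hj, hi⟩
      exact ⟨star w, star_mem hw, by rwa [star_star], by rwa [star_star]⟩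
    · rintro i j k ⟨w, hw, hwj, hwi⟩ ⟨z, hz, hzk, hzj⟩
      have hw' := mul_eq_self_of_star_mul_self_eq (he j) hwj
      have hz' := mul_eq_self_of_star_mul_self_eq (he k) hzk
      refine ⟨w * z, mul_mem hw hz, ?_, ?_⟩
      · rw [star_mul, mul_assoc, ← mul_assoc (star w), hwj, ← hzj, mul_assoc z, hzk, hz', hzk]
      · rw [star_mul, mul_assoc, ← mul_assoc z, hzj, ← mul_assoc, hw', hwi]

theorem exists_partialIsometry_representatives {ι : Type v} [Finite ι] {e : ι → X}
    (he : ∀ i, IsMinimalProjection B (e i)) :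
    ∃ (κ : Type v) (_ : Finite κ) (q : κ → X) (cls : ι → κ) (g : ι → X),
      (∀ k, IsMinimalProjection B (q k)) ∧
      (∀ k l, k ≠ l → ∀ x ∈ B, q k * x * q l = 0) ∧
      ∀ i, g i ∈ B ∧ star (g i) * g i = q (cls i) ∧ g i * star (g i) = e i := by
  let S := murrayVonNeumannSetoid (fun i => (he i).toIsStarProjection) fun i => (he i).mem
  have hout : ∀ i, ∃ w ∈ B, star w * w = e (⟦i⟧ : Quotient S).out ∧ w * star w = e i :=
    fun i => S.symm (Quotient.mk_out i)
  choose g hg using hout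
  refine ⟨Quotient S, inferInstance, fun k => e k.out, fun i => ⟦i⟧, g, fun k => he _, ?_, hg⟩
  intro k l hkl x hx
  by_contra hne
  exact hkl (Quotient.out_equiv_out.1 ((he _).exists_partialIsometry (he _) hx hne))

end MinimalProjection

section OrthogonalSums

variable {X : Type*} [NonUnitalCStarAlgebra X]

theorem norm_add_le_of_star_mul_eq_zero {a b : X} {C : ℝ} (ha : ‖a‖ ≤ C) (hb : ‖b‖ ≤ C)
    (hleft : star a * b = 0) (hright : a * star b = 0) : ‖a + b‖ ≤ C := by
  have hleft' : star b * a = 0 := by simpa using congrArg star hleft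
  have hab : star a * a * (star b * b) = 0 := by
    rw [mul_assoc, ← mul_assoc a, hright, zero_mul, mul_zero]
  refine abs_le_of_sq_le_sq' ?_ ((norm_nonneg a).trans ha) |>.2
  calc ‖a + b‖ ^ 2 = ‖star a * a + star b * b‖ := by
        rw [sq, ← CStarRing.norm_star_mul_self, star_add, add_mul, mul_add, mul_add, hleft, hleft',
          add_zero, zero_add]
    _ = max (‖a‖ ^ 2) (‖b‖ ^ 2) := by
        rw [(IsSelfAdjoint.star_mul_self a).norm_add_eq_max (.star_mul_self b) hab,
          CStarRing.norm_star_mul_self, CStarRing.norm_star_mul_self, sq, sq]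
    _ ≤ C ^ 2 := max_le (by gcongr) (by gcongr)

theorem norm_sum_le_of_star_mul_eq_zero {ι : Type*} {s : Finset ι} {a : ι → X} {C : ℝ}
    (hC : 0 ≤ C) (ha : ∀ i ∈ s, ‖a i‖ ≤ C)
    (hleft : ∀ i ∈ s, ∀ j ∈ s, i ≠ j → star (a i) * a j = 0)
    (hright : ∀ i ∈ s, ∀ j ∈ s, i ≠ j → a i * star (a j) = 0) : ‖∑ i ∈ s, a i‖ ≤ C := by
  classical
  induction s using Finset.induction with
  | empty => simpa
  | insert j s hj ih =>
    rw [Finset.sum_insert hj]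
    refine norm_add_le_of_star_mul_eq_zero (ha j (by simp)) (ih ?_ ?_ ?_) ?_ ?_
    · exact fun i hi => ha i (by simp [hi])
    · exact fun i hi k hk => hleft i (by simp [hi]) k (by simp [hk])
    · exact fun i hi k hk => hright i (by simp [hi]) k (by simp [hk])
    · rw [Finset.mul_sum]
      exact Finset.sum_eq_zero fun i hi => hleft j (by simp) i (by simp [hi]) (by grind)
    · rw [star_sum, Finset.mul_sum]
      exact Finset.sum_eq_zero fun i hi => hright j (by simp) i (by simp [hi]) (by grind)

/-- The corner `(1 - P) z (1 - P)` of `z`, written without a unit. -/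
def complCorner (P : X) : X →ₗ[ℂ] X :=
  LinearMap.id - LinearMap.mulLeft ℂ P - LinearMap.mulRight ℂ P +
    LinearMap.mulLeft ℂ P ∘ₗ LinearMap.mulRight ℂ P

theorem complCorner_apply (P z : X) : complCorner P z = z - P * z - z * P + P * (z * P) :=
  rfl

theorem mul_complCorner {P : X} (hP : IsIdempotentElem P) (z : X) : P * complCorner P z = 0 := by
  simp [complCorner_apply, mul_add, mul_sub, ← mul_assoc, hP.eq]

theorem complCorner_mul {P : X} (hP : IsIdempotentElem P) (z : X) : complCorner P z * P = 0 := by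
  simp [complCorner_apply, add_mul, sub_mul, mul_assoc, hP.eq]

theorem complCorner_star {P : X} (hP : IsSelfAdjoint P) (z : X) :
    complCorner P (star z) = star (complCorner P z) := by
  simp only [complCorner_apply, star_add, star_sub, star_mul, hP.star_eq, mul_assoc]
  abel

theorem norm_complCorner_le {P : X} (hP : IsStarProjection P) (z : X) :
    ‖complCorner P z‖ ≤ ‖z‖ := by
  have hinr : ((complCorner P z : X) : Unitization ℂ X) = (1 - (P : Unitization ℂ X)) * z *
      (1 - (P : Unitization ℂ X)) := by
    simp only [complCorner_apply, Unitization.inr_add, Unitization.inr_sub, Unitization.inr_mul]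
    noncomm_ring
  have hproj : IsStarProjection (1 - (P : Unitization ℂ X)) := by
    refine IsStarProjection.one_sub ⟨?_, ?_⟩
    · rw [IsIdempotentElem, ← Unitization.inr_mul, hP.isIdempotentElem.eq]
    · rw [IsSelfAdjoint, ← Unitization.inr_star, hP.isSelfAdjoint.star_eq]
  have hnorm : ‖1 - (P : Unitization ℂ X)‖ ≤ 1 := hproj.norm_le
  rw [← Unitization.norm_inr (𝕜 := ℂ) (A := X), hinr]
  calc _ ≤ ‖1 - (P : Unitization ℂ X)‖ * ‖(z : Unitization ℂ X)‖ * ‖1 - (P : Unitization ℂ X)‖ :=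
        norm_mul₃_le
    _ ≤ 1 * ‖(z : Unitization ℂ X)‖ * 1 := by gcongr
    _ = ‖z‖ := by rw [one_mul, mul_one, Unitization.norm_inr]

/-- The multiplicative domain argument: the left hand side of `h` minus the right hand side is
`d* d` for `d = a P - P a P`. -/
theorem mul_eq_compress_of_star_mul_self {P a : X} (hP : IsStarProjection P)
    (h : P * (star a * a) * P = star (P * a * P) * (P * a * P)) : a * P = P * a * P := by
  have hPstar : star P = P := hP.isSelfAdjoint
  have hPP (z : X) : P * (P * z) = P * z := by rw [← mul_assoc, hP.isIdempotentElem.eq]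
  rw [← sub_eq_zero, ← CStarRing.star_mul_self_eq_zero_iff]
  rw [← sub_eq_zero] at h
  calc star (a * P - P * a * P) * (a * P - P * a * P)
      = P * (star a * a) * P - star (P * a * P) * (P * a * P) := by
        simp only [star_sub, star_mul, hPstar, sub_mul, mul_sub, mul_assoc, hPP]
        abel
    _ = 0 := h

end OrthogonalSums

section BlockDiagonal

variable {J K κ : Type*}

open Classical in
/-- The block-diagonal part of a matrix, for the partition of the index set given by `f`. -/
def pinch (f : J → κ) : Matrix J J ℂ →ₗ[ℂ] Matrix J J ℂ where
  toFun M := Matrix.of fun a b => if f a = f b then M a b else 0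
  map_add' M N := by ext; simp [ite_add_zero]
  map_smul' c M := by ext; simp

theorem pinch_apply [DecidableEq κ] (f : J → κ) (M : Matrix J J ℂ) (a b : J) :
    pinch f M a b = if f a = f b then M a b else 0 := by
  simp [pinch]

theorem pinch_eq_self_of_subsingleton [Subsingleton κ] (f : J → κ) (M : Matrix J J ℂ) :
    pinch f M = M := by
  ext a b
  simp [pinch, Subsingleton.elim (f a) (f b)]

theorem pinch_one [DecidableEq J] (f : J → κ) : pinch f (1 : Matrix J J ℂ) = 1 := by
  ext a b
  by_cases hab : a = b <;> simp [pinch, Matrix.one_apply, hab]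

variable [Fintype J] [Fintype K] [DecidableEq J] [DecidableEq K]

theorem isStarProjection_diagonal_indicator (s : J → Prop) [DecidablePred s] :
    IsStarProjection (Matrix.diagonal fun a => if s a then (1 : ℂ) else 0) where
  isIdempotentElem := by simp [IsIdempotentElem, Matrix.diagonal_mul_diagonal]
  isSelfAdjoint := by
    rw [IsSelfAdjoint, Matrix.star_eq_conjTranspose, Matrix.diagonal_conjTranspose]
    congr 1 with a
    split_ifs <;> simp [*]

open scoped Matrix.Norms.L2Operator in
theorem norm_pinch_le (f : J → κ) (M : Matrix J J ℂ) : ‖pinch f M‖ ≤ ‖M‖ := by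
  classical
  let d (i : κ) : Matrix J J ℂ := Matrix.diagonal fun a => if f a = i then 1 else 0
  have hd i : IsStarProjection (d i) := isStarProjection_diagonal_indicator _
  have hdd {i j : κ} (hij : i ≠ j) : d i * d j = 0 := by
    rw [Matrix.diagonal_mul_diagonal, ← Matrix.diagonal_zero]
    congr 1 with a
    grind
  have hsum : pinch f M = ∑ i ∈ Finset.univ.image f, d i * M * d i := by
    ext a b
    rw [Matrix.sum_apply, Finset.sum_eq_single_of_mem (f a) (by simp)]
    · simp [d, pinch_apply, Matrix.mul_diagonal, Matrix.diagonal_mul, eq_comm]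
    · intro i _ hi
      simp [d, Matrix.mul_diagonal, Matrix.diagonal_mul, hi.symm]
  have hstar i : star (d i) = d i := (hd i).isSelfAdjoint
  rw [hsum]
  refine norm_sum_le_of_star_mul_eq_zero (norm_nonneg M) (fun i _ => ?_) (fun i _ j _ hij => ?_)
    fun i _ j _ hij => ?_
  · calc ‖d i * M * d i‖ ≤ ‖d i‖ * ‖M‖ * ‖d i‖ := norm_mul₃_le
      _ ≤ 1 * ‖M‖ * 1 := by gcongr <;> exact (hd i).norm_le
      _ = ‖M‖ := by ring
  · calc star (d i * M * d i) * (d j * M * d j) = d i * star M * (d i * d j) * M * d j := by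
          simp only [star_mul, hstar, mul_assoc]
      _ = 0 := by simp [hdd hij]
  · calc d i * M * d i * star (d j * M * d j) = d i * M * (d i * d j) * star M * d j := by
          simp only [star_mul, hstar, mul_assoc]
      _ = 0 := by simp [hdd hij]

open scoped Matrix.Norms.L2Operator in
theorem norm_submatrix_le_of_injective {f : K → J} (hf : f.Injective) (M : Matrix J J ℂ) :
    ‖M.submatrix f f‖ ≤ ‖M‖ := by
  let V : Matrix J K ℂ := (1 : Matrix J J ℂ).submatrix id f
  have hV : V.conjTranspose * V = 1 := by
    ext a b
    simp [V, Matrix.mul_apply, Matrix.one_apply, hf.eq_iff]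
  have hVnorm : ‖V‖ ≤ 1 := by
    have hsq := Matrix.l2_opNorm_conjTranspose_mul_self V
    have hone : ‖(1 : Matrix K K ℂ)‖ ≤ 1 := (IsStarProjection.one (Matrix K K ℂ)).norm_le
    rw [hV] at hsq
    nlinarith [norm_nonneg V]
  have hM : M.submatrix f f = V.conjTranspose * M * V := by
    ext a b
    simp [V, Matrix.mul_apply, Matrix.one_apply]
  calc ‖M.submatrix f f‖ ≤ ‖V.conjTranspose * M‖ * ‖V‖ := hM ▸ Matrix.l2_opNorm_mul _ _
    _ ≤ (‖V.conjTranspose‖ * ‖M‖) * ‖V‖ := by gcongr; exact Matrix.l2_opNorm_mul _ _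
    _ ≤ (1 * ‖M‖) * 1 := by rw [Matrix.l2_opNorm_conjTranspose]; gcongr
    _ = ‖M‖ := by ring

end BlockDiagonal

section MatrixSystem

open scoped Matrix.Norms.L2Operator

variable {X : Type*} [NonUnitalCStarAlgebra X] {B : NonUnitalStarSubalgebra ℂ X}
  {κ J : Type*} {q : κ → X} {cls : J → κ} {v : J → X} {x y : X}

/-- A bounded linear functional with value `1` at `q`; a junk functional when `q = 0`. -/
def coeff (q : X) : X →L[ℂ] ℂ :=
  Classical.epsilon fun f => f q = 1

theorem coeff_self {q : X} (hq : q ≠ 0) : coeff q q = 1 :=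
  Classical.epsilon_spec (SeparatingDual.exists_eq_one (R := ℂ) hq)

/-- The subalgebra of block-diagonal matrices, for the partition of the index set given by
`f`. -/
def blockMatrices [Fintype J] (f : J → κ) : NonUnitalStarSubalgebra ℂ (Matrix J J ℂ) where
  carrier := {M | ∀ a b, f a ≠ f b → M a b = 0}
  add_mem' hM hN a b hab := by simp [hM a b hab, hN a b hab]
  zero_mem' _ _ _ := rfl
  mul_mem' {M N} hM hN a b hab := by
    refine Finset.sum_eq_zero fun c _ => ?_
    by_cases hac : f a = f c
    · simp [hN c b (hac ▸ hab)]
    · simp [hM a c hac]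
  smul_mem' c M hM a b hab := by simp [hM a b hab]
  star_mem' {M} hM a b hab := by simp [Matrix.star_apply, hM b a hab.symm]

theorem mem_blockMatrices_iff [Fintype J] {f : J → κ} {M : Matrix J J ℂ} :
    M ∈ blockMatrices f ↔ pinch f M = M := by
  classical
  rw [← Matrix.ext_iff]
  refine forall₂_congr fun a b => ?_
  rw [pinch_apply]
  split_ifs with hab <;> simp [hab, eq_comm]

/-- A system of partial isometries `v a` in `B` with pairwise orthogonal ranges. The initial
projection of `v a` is the minimal projection `q (cls a)`, and the projections `q k` are pairwise
inequivalent in `B`. Such a system identifies a corner of `B` with an algebra of block-diagonal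
matrices, the blocks being the fibres of `cls`. -/
structure MatrixSystem [DecidableEq J] (B : NonUnitalStarSubalgebra ℂ X) (q : κ → X) (cls : J → κ)
    (v : J → X) : Prop where
  isMinimal : ∀ k, IsMinimalProjection B (q k)
  inequivalent : ∀ k l, k ≠ l → ∀ x ∈ B, q k * x * q l = 0
  mem : ∀ a, v a ∈ B
  star_mul_eq_ite : ∀ a b, star (v a) * v b = if a = b then q (cls a) else 0

/-- The matrix of `x` with respect to a system of partial isometries. The entries are defined
through linear functionals, so that they depend linearly on all `x : X`; they are meaningful only
for `x` in the subalgebra of the system. -/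
def coord (q : κ → X) (cls : J → κ) (v : J → X) : X →ₗ[ℂ] Matrix J J ℂ where
  toFun x := Matrix.of fun a b => coeff (q (cls a)) (star (v a) * x * v b)
  map_add' x y := by ext; simp [mul_add, add_mul]
  map_smul' c x := by ext; simp [mul_smul_comm, smul_mul_assoc]

/-- The element of `X` with prescribed matrix with respect to a system of partial isometries. -/
def synth [Fintype J] (v : J → X) : Matrix J J ℂ →ₗ[ℂ] X where
  toFun M := ∑ a, ∑ b, M a b • (v a * star (v b))
  map_add' M N := by simp [add_smul, Finset.sum_add_distrib]
  map_smul' c M := by simp [Finset.smul_sum, smul_smul]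

theorem coord_apply (a b : J) :
    coord q cls v x a b = coeff (q (cls a)) (star (v a) * x * v b) :=
  rfl

theorem synth_apply [Fintype J] (M : Matrix J J ℂ) :
    synth v M = ∑ a, ∑ b, M a b • (v a * star (v b)) :=
  rfl

theorem synth_one [Fintype J] [DecidableEq J] : synth v 1 = ∑ a, v a * star (v a) := by
  simp [synth_apply, Matrix.one_apply]

theorem synth_star [Fintype J] (M : Matrix J J ℂ) : synth v (star M) = star (synth v M) := by
  simp only [synth_apply, star_sum, star_smul, star_mul, star_star, Matrix.star_apply]
  exact Finset.sum_comm

namespace MatrixSystem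

variable [DecidableEq J]

theorem mul_proj (h : MatrixSystem B q cls v) (a : J) : v a * q (cls a) = v a :=
  mul_eq_self_of_star_mul_self_eq (h.isMinimal _).toIsStarProjection (by simp [h.star_mul_eq_ite])

theorem proj_mul_star (h : MatrixSystem B q cls v) (a : J) :
    q (cls a) * star (v a) = star (v a) := by
  simpa [(h.isMinimal (cls a)).isSelfAdjoint.star_eq] using congrArg star (h.mul_proj a)

theorem mul_proj_of_ne (h : MatrixSystem B q cls v) {a : J} {k : κ} (hk : cls a ≠ k) :
    v a * q k = 0 := by
  calc v a * q k = v a * (q (cls a) * q (cls a) * q k) := by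
        simp only [← mul_assoc, h.mul_proj]
    _ = 0 := by rw [h.inequivalent _ _ hk _ (h.isMinimal _).mem, mul_zero]

theorem mul_star_eq_zero (h : MatrixSystem B q cls v) {a b : J} (hab : cls a ≠ cls b) :
    v a * star (v b) = 0 := by
  rw [← h.proj_mul_star, ← mul_assoc, h.mul_proj_of_ne hab, zero_mul]

theorem coord_eq_of_star_mul_mul_eq (h : MatrixSystem B q cls v) {c : ℂ} {a b : J}
    (hc : star (v a) * x * v b = c • q (cls a)) :
    coord q cls v x a b = c := by
  rw [coord_apply, hc, map_smul, coeff_self (h.isMinimal _).ne_zero, smul_eq_mul, mul_one]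

theorem proj_mul_mul_proj (h : MatrixSystem B q cls v) (x : X) (a b : J) :
    q (cls a) * (star (v a) * x * v b) * q (cls b) = star (v a) * x * v b := by
  simp only [← mul_assoc, h.proj_mul_star]
  rw [mul_assoc, h.mul_proj]

theorem star_mul_mul_eq (h : MatrixSystem B q cls v) (hx : x ∈ B) (a b : J) :
    star (v a) * x * v b = coord q cls v x a b • q (cls a) := by
  obtain ⟨c, hc⟩ : ∃ c : ℂ, star (v a) * x * v b = c • q (cls a) := by
    have hmem : star (v a) * x * v b ∈ B := mul_mem (mul_mem (star_mem (h.mem a)) hx) (h.mem b)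
    rw [← h.proj_mul_mul_proj]
    by_cases hab : cls a = cls b
    · exact hab ▸ (h.isMinimal (cls a)).exists_smul _ hmem
    · exact ⟨0, by rw [h.inequivalent _ _ hab _ hmem, zero_smul]⟩
  rw [hc, h.coord_eq_of_star_mul_mul_eq hc]

theorem coord_of_ne (h : MatrixSystem B q cls v) (hx : x ∈ B) {a b : J} (hab : cls a ≠ cls b) :
    coord q cls v x a b = 0 := by
  refine h.coord_eq_of_star_mul_mul_eq ?_
  rw [← h.proj_mul_mul_proj, zero_smul,
    h.inequivalent _ _ hab _ (mul_mem (mul_mem (star_mem (h.mem a)) hx) (h.mem b))]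

theorem coord_star (h : MatrixSystem B q cls v) (hx : x ∈ B) :
    coord q cls v (star x) = star (coord q cls v x) := by
  ext a b
  rw [Matrix.star_apply]
  by_cases hab : cls b = cls a
  · refine h.coord_eq_of_star_mul_mul_eq ?_
    have hq : star (q (cls a)) = q (cls a) := (h.isMinimal (cls a)).isSelfAdjoint
    simpa [mul_assoc, hab, hq] using congrArg star (h.star_mul_mul_eq hx b a)
  · rw [h.coord_of_ne hx hab, h.coord_of_ne (star_mem hx) (Ne.symm hab), star_zero]

theorem pinch_coord (h : MatrixSystem B q cls v) (hx : x ∈ B) :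
    pinch cls (coord q cls v x) = coord q cls v x := by
  classical
  ext a b
  rw [pinch_apply]
  split_ifs with hab
  · rfl
  · exact (h.coord_of_ne hx hab).symm

variable [Fintype J]

theorem synth_mem (h : MatrixSystem B q cls v) (M : Matrix J J ℂ) : synth v M ∈ B :=
  sum_mem fun a _ => sum_mem fun b _ =>
    SMulMemClass.smul_mem _ (mul_mem (h.mem a) (star_mem (h.mem b)))

theorem synth_pinch (h : MatrixSystem B q cls v) (M : Matrix J J ℂ) :
    synth v (pinch cls M) = synth v M := by
  classical
  refine Finset.sum_congr rfl fun a _ => Finset.sum_congr rfl fun b _ => ?_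
  rw [pinch_apply]
  split_ifs with hab
  · rfl
  · rw [h.mul_star_eq_zero hab, smul_zero, smul_zero]

theorem synth_mul_apply (h : MatrixSystem B q cls v) (M : Matrix J J ℂ) (b : J) :
    synth v M * v b = ∑ a, pinch cls M a b • v a := by
  classical
  rw [← h.synth_pinch]
  simp only [synth_apply, Finset.sum_mul, smul_mul_assoc, mul_assoc, h.star_mul_eq_ite, mul_ite,
    mul_zero, smul_ite, smul_zero, Finset.sum_ite_eq', Finset.mem_univ, if_true]
  refine Finset.sum_congr rfl fun a _ => ?_
  rw [pinch_apply]
  split_ifs with hab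
  · rw [← hab, h.mul_proj]
  · simp

theorem synth_pinch_mul (h : MatrixSystem B q cls v) (M N : Matrix J J ℂ) :
    synth v (pinch cls M * N) = synth v M * synth v N := by
  calc synth v (pinch cls M * N)
      = ∑ b, ∑ c, ∑ a, N b c • (pinch cls M a b • (v a * star (v c))) := by
        simp only [synth_apply, Matrix.mul_apply, Finset.sum_smul, smul_smul, mul_comm (N _ _)]
        rw [Finset.sum_comm_cycle]
        exact Finset.sum_congr rfl fun b _ => Finset.sum_comm
    _ = synth v M * synth v N := by
        conv_rhs => rw [synth_apply N]
        simp only [Finset.mul_sum, mul_smul_comm, ← mul_assoc, h.synth_mul_apply, Finset.sum_mul,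
          Finset.smul_sum, smul_mul_assoc]

theorem coord_synth (h : MatrixSystem B q cls v) (M : Matrix J J ℂ) :
    coord q cls v (synth v M) = pinch cls M := by
  ext a b
  refine h.coord_eq_of_star_mul_mul_eq ?_
  simp [mul_assoc, h.synth_mul_apply, Finset.mul_sum, mul_smul_comm, h.star_mul_eq_ite]

theorem synth_mul_of_subsingleton (h : MatrixSystem B q cls v) [Subsingleton κ]
    (M N : Matrix J J ℂ) :
    synth v (M * N) = synth v M * synth v N := by
  rw [← h.synth_pinch_mul, pinch_eq_self_of_subsingleton]

theorem coord_synth_of_subsingleton (h : MatrixSystem B q cls v) [Subsingleton κ]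
    (M : Matrix J J ℂ) :
    coord q cls v (synth v M) = M := by
  rw [h.coord_synth, pinch_eq_self_of_subsingleton]

theorem synth_one_mul_apply (h : MatrixSystem B q cls v) (a : J) :
    synth v (1 : Matrix J J ℂ) * v a = v a := by
  simp [h.synth_mul_apply, pinch_one, Matrix.one_apply]

theorem synth_one_mul_synth (h : MatrixSystem B q cls v) (M : Matrix J J ℂ) :
    synth v 1 * synth v M = synth v M := by
  rw [← h.synth_pinch_mul, pinch_one, one_mul]

theorem synth_mul_synth_one (h : MatrixSystem B q cls v) (M : Matrix J J ℂ) :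
    synth v M * synth v 1 = synth v M := by
  rw [← h.synth_pinch_mul, mul_one, h.synth_pinch]

theorem coord_mul_synth_one (h : MatrixSystem B q cls v) (x : X) :
    coord q cls v (x * synth v 1) = coord q cls v x := by
  ext a b
  simp only [coord_apply, mul_assoc, h.synth_one_mul_apply]

theorem isStarProjection_synth_one (h : MatrixSystem B q cls v) :
    IsStarProjection (synth v (1 : Matrix J J ℂ)) where
  isIdempotentElem := h.synth_one_mul_synth 1
  isSelfAdjoint := by rw [IsSelfAdjoint, ← synth_star, star_one]

theorem synth_coord (h : MatrixSystem B q cls v) (hx : x ∈ B) :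
    synth v (coord q cls v x) = synth v 1 * x * synth v 1 := by
  rw [synth_one]
  simp only [synth_apply, Finset.sum_mul, Finset.mul_sum]
  rw [Finset.sum_comm]
  refine Finset.sum_congr rfl fun b _ => Finset.sum_congr rfl fun a _ => ?_
  calc coord q cls v x a b • (v a * star (v b))
      = v a * (coord q cls v x a b • q (cls a)) * star (v b) := by
        rw [mul_smul_comm, smul_mul_assoc, h.mul_proj]
    _ = v a * star (v a) * x * (v b * star (v b)) := by
        rw [← h.star_mul_mul_eq hx]; simp only [mul_assoc]

theorem norm_synth (h : MatrixSystem B q cls v) (M : Matrix J J ℂ) :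
    ‖synth v M‖ = ‖pinch cls M‖ := by
  classical
  let f : blockMatrices cls →⋆ₙₐ[ℂ] X :=
    { toFun := fun M => synth v (M : Matrix J J ℂ)
      map_smul' := fun c M => map_smul _ _ _
      map_zero' := map_zero _
      map_add' := fun M N => map_add _ _ _
      map_mul' := fun M N => by
        rw [← h.synth_pinch_mul, mem_blockMatrices_iff.1 M.2]; rfl
      map_star' := fun M => synth_star _ }
  have hf : Function.Injective f := fun M N hMN => by
    have := congrArg (coord q cls v) hMN
    exact Subtype.ext <| by
      rwa [← mem_blockMatrices_iff.1 M.2, ← mem_blockMatrices_iff.1 N.2, ← h.coord_synth,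
        ← h.coord_synth]
  have : FiniteDimensional ℂ (blockMatrices cls) :=
    inferInstanceAs (FiniteDimensional ℂ (blockMatrices cls).toNonUnitalSubalgebra.toSubmodule)
  have hclosed := isClosed_of_finiteDimensional (blockMatrices cls)
  have hmem : pinch cls M ∈ blockMatrices cls := fun a b hab => by rw [pinch_apply, if_neg hab]
  rw [← h.synth_pinch]
  exact NonUnitalStarAlgHom.norm_map f hf ⟨pinch cls M, hmem⟩

theorem norm_synth_le (h : MatrixSystem B q cls v) (M : Matrix J J ℂ) : ‖synth v M‖ ≤ ‖M‖ :=
  (h.norm_synth M).trans_le (norm_pinch_le cls M)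

theorem norm_coord_le (h : MatrixSystem B q cls v) (hx : x ∈ B) : ‖coord q cls v x‖ ≤ ‖x‖ := by
  have hP : ‖synth v (1 : Matrix J J ℂ)‖ ≤ 1 := h.isStarProjection_synth_one.norm_le
  calc ‖coord q cls v x‖ = ‖synth v 1 * x * synth v 1‖ := by
        rw [← h.synth_coord hx, h.norm_synth, h.pinch_coord hx]
    _ ≤ ‖synth v (1 : Matrix J J ℂ)‖ * ‖x‖ * ‖synth v (1 : Matrix J J ℂ)‖ := norm_mul₃_le
    _ ≤ 1 * ‖x‖ * 1 := by gcongr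
    _ = ‖x‖ := by ring

end MatrixSystem

end MatrixSystem

section Refinement

variable {X : Type*} [NonUnitalCStarAlgebra X] {B B' : NonUnitalStarSubalgebra ℂ X}
  {κ κ' J ι J' : Type*} [DecidableEq ι]
  {q : κ → X} {cls : J → κ} {v : J → X} {q' : κ' → X} {cls' : ι → κ'} {g : ι → X}
  {α : J' → J} {β : J' → ι}

/-- The matrix over `J'` obtained by repeating the matrix `M` over `J` along the fibres of `β`. It
describes an element of a subalgebra in a product `v ∘ α * g ∘ β` of two matrix systems. -/
def amplify (α : J' → J) (β : J' → ι) (M : Matrix J J ℂ) : Matrix J' J' ℂ :=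
  Matrix.of fun a b => if β a = β b then M (α a) (α b) else 0

theorem submatrix_amplify {f : J → J'} (hα : ∀ s, α (f s) = s)
    (hβ : ∀ a b, β (f a) = β (f b) ↔ cls a = cls b) (M : Matrix J J ℂ) :
    (amplify α β M).submatrix f f = pinch cls M := by
  classical
  ext a b
  simp [amplify, pinch_apply, hα, hβ]

variable [DecidableEq J]

namespace MatrixSystem

theorem comp_injective (h : MatrixSystem B q cls v) {f : ι → J} (hf : f.Injective) :
    MatrixSystem B q (cls ∘ f) (v ∘ f) where
  isMinimal := h.isMinimal
  inequivalent := h.inequivalent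
  mem a := h.mem (f a)
  star_mul_eq_ite a b := by simp [h.star_mul_eq_ite, hf.eq_iff]

theorem mul [DecidableEq J'] (h : MatrixSystem B q cls v) (h' : MatrixSystem B' q' cls' g)
    (hB : B ≤ B') (hinj : ∀ a b, α a = α b → β a = β b → a = b)
    (hqg : ∀ a, q (cls (α a)) * g (β a) = g (β a)) :
    MatrixSystem B' q' (cls' ∘ β) (v ∘ α * g ∘ β) where
  isMinimal := h'.isMinimal
  inequivalent := h'.inequivalent
  mem a := mul_mem (hB (h.mem _)) (h'.mem _)
  star_mul_eq_ite a b := by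
    have hassoc : star ((v ∘ α * g ∘ β) a) * (v ∘ α * g ∘ β) b =
        star (g (β a)) * (star (v (α a)) * v (α b) * g (β b)) := by
      simp only [Pi.mul_apply, Function.comp_apply, star_mul, mul_assoc]
    rw [hassoc, h.star_mul_eq_ite]
    split_ifs with hα hab hab
    · rw [hα, hqg, h'.star_mul_eq_ite, if_pos (by rw [hab]), Function.comp_apply]
    · rw [hα, hqg, h'.star_mul_eq_ite, if_neg fun hβ => hab (hinj a b hα hβ)]
    · exact absurd (by rw [hab]) hα
    · simp

theorem coord_mul_eq_amplify (h : MatrixSystem B q cls v) (h' : MatrixSystem B' q' cls' g)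
    (hqg : ∀ a, q (cls (α a)) * g (β a) = g (β a)) {x : X} (hx : x ∈ B) :
    coord q' (cls' ∘ β) (v ∘ α * g ∘ β) x = amplify α β (coord q cls v x) := by
  ext a b
  have hgq : star (g (β a)) * q (cls (α a)) = star (g (β a)) := by
    simpa [(h.isMinimal (cls (α a))).isSelfAdjoint.star_eq] using congrArg star (hqg a)
  have hentry : star ((v ∘ α * g ∘ β) a) * x * (v ∘ α * g ∘ β) b =
      coord q cls v x (α a) (α b) • if β a = β b then q' (cls' (β a)) else 0 := by
    calc star ((v ∘ α * g ∘ β) a) * x * (v ∘ α * g ∘ β) b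
        = star (g (β a)) * (star (v (α a)) * x * v (α b)) * g (β b) := by
          simp only [Pi.mul_apply, Function.comp_apply, star_mul, mul_assoc]
      _ = coord q cls v x (α a) (α b) • if β a = β b then q' (cls' (β a)) else 0 := by
          rw [h.star_mul_mul_eq hx, mul_smul_comm, smul_mul_assoc, hgq, h'.star_mul_eq_ite]
  rw [coord_apply, hentry, map_smul, amplify, Matrix.of_apply, Function.comp_apply]
  split_ifs <;> simp [coeff_self (h'.isMinimal _).ne_zero]

end MatrixSystem

theorem synth_one_of_sum_eq [Fintype J] {n : κ → ℕ} {g : (Σ k, Fin (n k)) → X}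
    (h : MatrixSystem B q cls v) (hsum : ∀ k, ∑ i, g ⟨k, i⟩ * star (g ⟨k, i⟩) = q k) :
    synth (v ∘ Sigma.fst * g ∘ Sigma.map cls fun _ => id) (1 : Matrix (Σ s, Fin (n (cls s))) _ ℂ) =
      synth v 1 := by
  simp only [synth_one, Fintype.sum_sigma]
  refine Finset.sum_congr rfl fun s _ => ?_
  calc ∑ i, v s * g ⟨cls s, i⟩ * star (v s * g ⟨cls s, i⟩)
      = v s * (∑ i, g ⟨cls s, i⟩ * star (g ⟨cls s, i⟩)) * star (v s) := by
        simp only [star_mul, Finset.mul_sum, Finset.sum_mul, mul_assoc]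
    _ = v s * star (v s) := by rw [hsum, h.mul_proj]

theorem exists_isMinimalProjection_sum_eq [FiniteDimensional ℂ B] {p : X} (hp : IsStarProjection p)
    (hpB : p ∈ B) : ∃ (n : ℕ) (e : Fin n → X), (∀ i, IsMinimalProjection B (e i)) ∧
      (∀ i j, i ≠ j → e i * e j = 0) ∧ (∀ i, p * e i = e i ∧ e i * p = e i) ∧ ∑ i, e i = p := by
  obtain ⟨s, hs⟩ := exists_isMinimalDecomposition hp hpB
  refine ⟨s.card, fun i => s.equivFin.symm i, fun i => hs.minimal _ (Subtype.coe_prop _),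
    fun i j hij => hs.orthogonal (Subtype.coe_prop _) (Subtype.coe_prop _) ?_,
    fun i => ⟨hs.mul_left (Subtype.coe_prop _), hs.mul_right (Subtype.coe_prop _)⟩, ?_⟩
  · simpa [Subtype.coe_inj] using hij
  · rw [s.equivFin.symm.sum_comp fun x : s => (x : X), ← hs.sum_eq]
    exact Finset.sum_coe_sort s id

/-- Splitting orthogonal projections `q k` into minimal projections of `B`, and these into
equivalence classes, produces a matrix system. -/
theorem exists_matrixSystem_sum_eq {κ : Type} [Finite κ] [DecidableEq κ] [FiniteDimensional ℂ B]
    {q : κ → X} (hq : ∀ k, IsStarProjection (q k)) (hqB : ∀ k, q k ∈ B)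
    (hqq : ∀ k l, k ≠ l → q k * q l = 0) :
    ∃ (n : κ → ℕ) (κ' : Type) (_ : Finite κ') (q' : κ' → X) (cls' : (Σ k, Fin (n k)) → κ')
      (g : (Σ k, Fin (n k)) → X), MatrixSystem B q' cls' g ∧ (∀ i, q i.1 * g i = g i) ∧
        ∀ k, ∑ i, g ⟨k, i⟩ * star (g ⟨k, i⟩) = q k := by
  choose n e hmin horth hle hsum using fun k => exists_isMinimalProjection_sum_eq (hq k) (hqB k)
  obtain ⟨κ', hκ', q', cls', g, hq', hineq, hg⟩ :=
    exists_partialIsometry_representatives (e := fun i : Σ k, Fin (n k) => e i.1 i.2)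
      fun i => hmin i.1 i.2
  have hproj i : e i.1 i.2 * g i = g i := by
    rw [← (hg i).2.2, mul_assoc, (hg i).2.1, mul_eq_self_of_star_mul_self_eq
      (hq' _).toIsStarProjection (hg i).2.1]
  have horth' (i j : Σ k, Fin (n k)) (hij : i ≠ j) : e i.1 i.2 * e j.1 j.2 = 0 := by
    obtain ⟨k, i⟩ := i
    obtain ⟨l, j⟩ := j
    by_cases hkl : k = l
    · subst hkl
      exact horth k i j fun h => hij (by rw [h])
    · calc e k i * e l j = e k i * (q k * q l) * e l j := by
            rw [← mul_assoc, (hle k i).2, mul_assoc, (hle l j).1]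
        _ = 0 := by rw [hqq k l hkl, mul_zero, zero_mul]
  refine ⟨n, κ', hκ', q', cls', g, ⟨hq', hineq, fun i => (hg i).1, fun i j => ?_⟩, fun i => ?_,
    fun k => ?_⟩
  · split_ifs with hij
    · rw [← hij, (hg i).2.1]
    · have hestar : star (e i.1 i.2) = e i.1 i.2 := (hmin i.1 i.2).isSelfAdjoint
      rw [← hproj i, ← hproj j, star_mul, hestar, mul_assoc, ← mul_assoc (e _ _), horth' i j hij,
        zero_mul, mul_zero]
  · rw [← hproj i, ← mul_assoc, (hle i.1 i.2).1]
  · rw [← hsum k]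
    exact Finset.sum_congr rfl fun i _ => (hg ⟨k, i⟩).2.2

end Refinement

section Transfer

open scoped Matrix.Norms.L2Operator

variable {X Y : Type*} [NonUnitalCStarAlgebra X] [NonUnitalCStarAlgebra Y]
  {B B' : NonUnitalStarSubalgebra ℂ X} {S S' : NonUnitalStarSubalgebra ℂ Y}
  {κ κ' J J' ι : Type*} [Fintype J] [Fintype J'] [DecidableEq ι]
  {q : κ → X} {cls : J → κ} {v : J → X} {q' : κ' → X} {cls' : J' → κ'} {v' : J' → X}
  {Q Q' : Y} {u : J → Y} {u' : J' → Y} {α : J' → J} {β : J' → ι} {x : X}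

/-- A matrix system with a single block. It identifies a corner of `S` with a full matrix
algebra. -/
abbrev IsFrame [DecidableEq J] (S : NonUnitalStarSubalgebra ℂ Y) (Q : Y) (u : J → Y) : Prop :=
  MatrixSystem S (fun _ : Unit => Q) (fun _ => ()) u

/-- The linear map that replaces the partial isometries `v a` of a matrix system by the partial
isometries `u a` of a frame. -/
def transfer (q : κ → X) (cls : J → κ) (v : J → X) (u : J → Y) : X →ₗ[ℂ] Y :=
  synth u ∘ₗ coord q cls v

theorem transfer_apply : transfer q cls v u x = synth u (coord q cls v x) :=
  rfl

namespace MatrixSystem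

variable [DecidableEq J] [DecidableEq J']

theorem transfer_star (h : MatrixSystem B q cls v) (hx : x ∈ B) :
    transfer q cls v u (star x) = star (transfer q cls v u x) := by
  rw [transfer_apply, h.coord_star hx, synth_star, transfer_apply]

theorem norm_transfer_le (h : MatrixSystem B q cls v) (hu : IsFrame S Q u) (hx : x ∈ B) :
    ‖transfer q cls v u x‖ ≤ ‖x‖ :=
  (hu.norm_synth_le _).trans (h.norm_coord_le hx)

section Complete

variable {X : Type*} [CStarAlgebra X] {B B' : NonUnitalStarSubalgebra ℂ X} {q : κ → X} {v : J → X}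
  {q' : κ' → X} {v' : J' → X} {x : X}

theorem synth_coord_of_complete (h : MatrixSystem B q cls v) (hone : synth v 1 = 1) (hx : x ∈ B) :
    synth v (coord q cls v x) = x := by
  rw [h.synth_coord hx, hone, one_mul, mul_one]

theorem coord_mul (h : MatrixSystem B q cls v) (hone : synth v 1 = 1) {y : X} (hx : x ∈ B)
    (hy : y ∈ B) :
    coord q cls v (x * y) = coord q cls v x * coord q cls v y := by
  have hmem {z : X} (hz : z ∈ B) : coord q cls v z ∈ blockMatrices cls :=
    mem_blockMatrices_iff.2 (h.pinch_coord hz)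
  calc coord q cls v (x * y)
      = coord q cls v (synth v (coord q cls v x * coord q cls v y)) := by
        conv_rhs => rw [← h.pinch_coord hx, h.synth_pinch_mul, h.synth_coord_of_complete hone hx,
          h.synth_coord_of_complete hone hy]
    _ = coord q cls v x * coord q cls v y := by
        rw [h.coord_synth, mem_blockMatrices_iff.1 (mul_mem (hmem hx) (hmem hy))]

theorem transfer_mul (h : MatrixSystem B q cls v) (hone : synth v 1 = 1) (hu : IsFrame S Q u)
    {y : X} (hx : x ∈ B) (hy : y ∈ B) :
    transfer q cls v u (x * y) = transfer q cls v u x * transfer q cls v u y := by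
  rw [transfer_apply, h.coord_mul hone hx hy, hu.synth_mul_of_subsingleton]; rfl

theorem transfer_mul_synth_one (h : MatrixSystem B q cls v) (hone : synth v 1 = 1)
    (hu : IsFrame S Q u) (h' : MatrixSystem B' q' cls' v')
    (hone' : synth v' 1 = 1) (hu' : IsFrame S' Q' u') (hB : B ≤ B') (hS : S ≤ S')
    (hv' : ∀ x ∈ B, coord q' cls' v' x = amplify α β (coord q cls v x))
    (hu'' : ∀ y ∈ S, coord (fun _ : Unit => Q') (fun _ => ()) u' y =
      amplify α β (coord (fun _ : Unit => Q) (fun _ => ()) u y))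
    (hx : x ∈ B) : transfer q cls v u x * synth u' 1 = transfer q' cls' v' u' x := by
  set P := synth u' (1 : Matrix J' J' ℂ)
  have hP : IsStarProjection P := hu'.isStarProjection_synth_one
  have hcorner {y : X} (hy : y ∈ B) :
      P * transfer q cls v u y * P = transfer q' cls' v' u' y := by
    have hyS : transfer q cls v u y ∈ S := hu.synth_mem _
    rw [← hu'.synth_coord (hS hyS), hu'' _ hyS, transfer_apply, hu.coord_synth_of_subsingleton,
      ← hv' y hy, transfer_apply]
  refine (mul_eq_compress_of_star_mul_self hP ?_).trans (hcorner hx)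
  rw [hcorner hx, ← h.transfer_star hx, ← h'.transfer_star (hB hx),
    ← h.transfer_mul hone hu (star_mem hx) hx, hcorner (mul_mem (star_mem hx) hx),
    h'.transfer_mul hone' hu' (hB (star_mem hx)) (hB hx)]

theorem synth_amplify (h : MatrixSystem B q cls v) (h' : MatrixSystem B' q' cls' v')
    (hone' : synth v' 1 = 1) (hB : B ≤ B')
    (hv' : ∀ x ∈ B, coord q' cls' v' x = amplify α β (coord q cls v x))
    (hcls : ∀ a b, β a = β b → cls (α a) = cls (α b)) (M : Matrix J J ℂ) :
    synth v' (amplify α β M) = synth v M := by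
  classical
  have hpinch : amplify α β (pinch cls M) = amplify α β M := by
    ext a b
    simp only [amplify, Matrix.of_apply, pinch_apply]
    split_ifs with hβ hα
    · rfl
    · exact absurd (hcls a b hβ) hα
    · rfl
  rw [← hpinch, ← h.coord_synth, ← hv' _ (h.synth_mem M),
    h'.synth_coord_of_complete hone' (hB (h.synth_mem M))]

end Complete

end MatrixSystem

end Transfer

section Stage

open scoped Matrix.Norms.L2Operator

variable {X : Type*} [CStarAlgebra X] {Y : Type*} [NonUnitalCStarAlgebra Y]
  {B B' : NonUnitalStarSubalgebra ℂ X} {S S' : NonUnitalStarSubalgebra ℂ Y}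

/-- One step of the inductive construction of a complemented embedding `X → Y`: a contraction `φ`
from `B` to `S` whose compression by the range projection of a frame `u` in `S` is the
homomorphism given by a complete matrix system `v` of `B`. -/
structure Stage (B : NonUnitalStarSubalgebra ℂ X) (S : NonUnitalStarSubalgebra ℂ Y) where
  (κ J : Type)
  [finite : Finite κ]
  [fintype : Fintype J]
  [decidableEq : DecidableEq κ]
  [decidableEq' : DecidableEq J]
  (q : κ → X) (cls : J → κ) (v : J → X)
  (Q : Y) (u : J → Y)
  φ : X →ₗ[ℂ] Y
  matrixSystem : MatrixSystem B q cls v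
  complete : synth v 1 = 1
  isFrame : IsFrame S Q u
  map_mem : ∀ x ∈ B, φ x ∈ S
  map_star : ∀ x ∈ B, φ (star x) = star (φ x)
  norm_le : ∀ x ∈ B, ‖φ x‖ ≤ ‖x‖
  map_mul_synth_one : ∀ x ∈ B, φ x * synth u 1 = transfer q cls v u x

namespace Stage

attribute [instance] Stage.finite Stage.fintype Stage.decidableEq Stage.decidableEq'

/-- The left inverse of `φ`: compress to the frame and read off the matrix. -/
def ψ (st : Stage B S) : Y →ₗ[ℂ] X :=
  transfer (fun _ : Unit => st.Q) (fun _ => ()) st.u st.v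

theorem coord_φ (st : Stage B S) {x : X} (hx : x ∈ B) :
    coord (fun _ : Unit => st.Q) (fun _ => ()) st.u (st.φ x) = coord st.q st.cls st.v x := by
  rw [← st.isFrame.coord_mul_synth_one, st.map_mul_synth_one x hx, transfer_apply,
    st.isFrame.coord_synth_of_subsingleton]

theorem ψ_φ (st : Stage B S) {x : X} (hx : x ∈ B) : st.ψ (st.φ x) = x := by
  rw [ψ, transfer_apply, st.coord_φ hx, st.matrixSystem.synth_coord_of_complete st.complete hx]

theorem norm_ψ_le (st : Stage B S) {y : Y} (hy : y ∈ S) : ‖st.ψ y‖ ≤ ‖y‖ :=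
  (st.matrixSystem.norm_synth_le _).trans (st.isFrame.norm_coord_le hy)

/-- The data needed to pass from a stage over `B` and `S` to one over larger subalgebras `B'` and
`S'`: the projections `q k` are split by a matrix system of `B'`, and there is room for a frame of
`S'` with the same index set below `Q`. -/
structure Refinement (st : Stage B S) (B' : NonUnitalStarSubalgebra ℂ X)
    (S' : NonUnitalStarSubalgebra ℂ Y) where
  le_left : B ≤ B'
  le_right : S ≤ S'
  n : st.κ → ℕ
  κ' : Type
  [finite : Finite κ']
  (q' : κ' → X) (cls' : (Σ k, Fin (n k)) → κ') (g : (Σ k, Fin (n k)) → X)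
  matrixSystem : MatrixSystem B' q' cls' g
  proj_mul : ∀ i, st.q i.1 * g i = g i
  sum_eq : ∀ k, ∑ i, g ⟨k, i⟩ * star (g ⟨k, i⟩) = st.q k
  (Q' : Y) (w : (Σ k, Fin (n k)) → Y)
  isFrame : IsFrame S' Q' w
  frame_proj_mul : ∀ i, st.Q * w i = w i

namespace Refinement

variable {st : Stage B S} (r : Refinement st B' S')

attribute [instance] Refinement.finite

/-- The index set of the refined systems. -/
abbrev J : Type :=
  Σ s, Fin (r.n (st.cls s))

/-- The class of the piece of `v s` indexed by `⟨s, i⟩` depends only on `⟨cls s, i⟩`. -/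
abbrev label : r.J → Σ k, Fin (r.n k) :=
  Sigma.map st.cls fun _ => id

/-- The refined matrix system of `B'`. -/
abbrev v : r.J → X :=
  st.v ∘ Sigma.fst * r.g ∘ r.label

/-- The refined frame of `S'`. -/
abbrev u : r.J → Y :=
  st.u ∘ Sigma.fst * r.w ∘ r.label

theorem eq_of_label_eq (a b : r.J) (hs : a.1 = b.1) (hab : r.label a = r.label b) : a = b := by
  obtain ⟨s, i⟩ := a
  obtain ⟨t, j⟩ := b
  obtain rfl : s = t := hs
  simpa [Sigma.map] using hab

theorem cls_eq_of_label_eq (a b : r.J) (hab : r.label a = r.label b) : st.cls a.1 = st.cls b.1 :=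
  congrArg Sigma.fst hab

theorem matrixSystem_v : MatrixSystem B' r.q' (r.cls' ∘ r.label) r.v :=
  st.matrixSystem.mul r.matrixSystem r.le_left r.eq_of_label_eq fun a => r.proj_mul (r.label a)

theorem isFrame_u : IsFrame S' r.Q' r.u :=
  st.isFrame.mul r.isFrame r.le_right r.eq_of_label_eq fun a => r.frame_proj_mul (r.label a)

theorem synth_v_one : synth r.v 1 = 1 :=
  (synth_one_of_sum_eq st.matrixSystem r.sum_eq).trans st.complete

theorem coord_v {x : X} (hx : x ∈ B) :
    coord r.q' (r.cls' ∘ r.label) r.v x = amplify Sigma.fst r.label (coord st.q st.cls st.v x) :=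
  st.matrixSystem.coord_mul_eq_amplify r.matrixSystem (fun a => r.proj_mul (r.label a)) hx

theorem coord_u {y : Y} (hy : y ∈ S) :
    coord (fun _ : Unit => r.Q') (fun _ => ()) r.u y =
      amplify Sigma.fst r.label (coord (fun _ : Unit => st.Q) (fun _ => ()) st.u y) :=
  st.isFrame.coord_mul_eq_amplify r.isFrame (fun a => r.frame_proj_mul (r.label a)) hy

theorem synth_one_mul_synth_one : synth st.u 1 * synth r.u 1 = synth r.u 1 := by
  simp only [synth_one (v := r.u), Finset.mul_sum, Pi.mul_apply, Function.comp_apply, ← mul_assoc,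
    st.isFrame.synth_one_mul_apply]

/-- The compression of `φ` to the refined frame. -/
def compression : X →ₗ[ℂ] Y :=
  transfer r.q' (r.cls' ∘ r.label) r.v r.u

theorem φ_mul_synth_one {x : X} (hx : x ∈ B) : st.φ x * synth r.u 1 = r.compression x := by
  rw [← r.synth_one_mul_synth_one, ← mul_assoc, st.map_mul_synth_one x hx]
  exact st.matrixSystem.transfer_mul_synth_one st.complete st.isFrame r.matrixSystem_v
    r.synth_v_one r.isFrame_u r.le_left r.le_right (fun _ => r.coord_v) (fun _ => r.coord_u) hx

theorem synth_one_mul_φ {x : X} (hx : x ∈ B) : synth r.u 1 * st.φ x = r.compression x := by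
  have hP : star (synth r.u 1) = synth r.u 1 := r.isFrame_u.isStarProjection_synth_one.isSelfAdjoint
  rw [← star_inj, star_mul, hP, ← st.map_star x hx, r.φ_mul_synth_one (star_mem hx), compression,
    r.matrixSystem_v.transfer_star (r.le_left hx)]

theorem n_pos (k : st.κ) : 0 < r.n k := by
  by_contra! hk
  have : IsEmpty (Fin (r.n k)) := by rw [Nat.le_zero.1 hk]; infer_instance
  exact (st.matrixSystem.isMinimal k).ne_zero (by rw [← r.sum_eq k, Finset.univ_eq_empty,
    Finset.sum_empty])

/-- A piece of each `st.v s`, chosen uniformly on the classes. -/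
def pick (s : st.J) : r.J :=
  ⟨s, 0, r.n_pos _⟩

theorem label_pick_eq_iff (a b : st.J) :
    r.label (r.pick a) = r.label (r.pick b) ↔ st.cls a = st.cls b :=
  ⟨r.cls_eq_of_label_eq _ _, congrArg fun k => (⟨k, 0, r.n_pos k⟩ : Σ k, Fin (r.n k))⟩

/-- A contractive projection of `B'` onto `B`: it compresses the matrix of `x` to the picked
indices. -/
def expectation : X →ₗ[ℂ] X where
  toFun x := synth st.v ((coord r.q' (r.cls' ∘ r.label) r.v x).submatrix r.pick r.pick)
  map_add' x y := by simp only [map_add, Matrix.submatrix_add, Pi.add_apply]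
  map_smul' c x := by simp only [map_smul, Matrix.submatrix_smul, Pi.smul_apply, RingHom.id_apply]

theorem expectation_apply (x : X) : r.expectation x =
    synth st.v ((coord r.q' (r.cls' ∘ r.label) r.v x).submatrix r.pick r.pick) :=
  rfl

theorem expectation_mem (x : X) : r.expectation x ∈ B :=
  st.matrixSystem.synth_mem _

theorem expectation_of_mem {x : X} (hx : x ∈ B) : r.expectation x = x := by
  rw [expectation_apply, r.coord_v hx, submatrix_amplify (fun _ => rfl) r.label_pick_eq_iff,
    st.matrixSystem.synth_pinch, st.matrixSystem.synth_coord_of_complete st.complete hx]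

theorem expectation_star {x : X} (hx : x ∈ B') :
    r.expectation (star x) = star (r.expectation x) := by
  rw [expectation_apply, r.matrixSystem_v.coord_star hx, expectation_apply, ← synth_star]
  rfl

theorem norm_expectation_le {x : X} (hx : x ∈ B') : ‖r.expectation x‖ ≤ ‖x‖ := by
  have hpick : Function.Injective r.pick := fun a b hab => congrArg Sigma.fst hab
  exact (st.matrixSystem.norm_synth_le _).trans
    ((norm_submatrix_le_of_injective hpick _).trans (r.matrixSystem_v.norm_coord_le hx))

/-- The contraction of the next stage. -/
def φ : X →ₗ[ℂ] Y :=
  r.compression + complCorner (synth r.u 1) ∘ₗ st.φ ∘ₗ r.expectation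

theorem φ_apply (x : X) :
    r.φ x = r.compression x + complCorner (synth r.u 1) (st.φ (r.expectation x)) :=
  rfl

theorem φ_of_mem {x : X} (hx : x ∈ B) : r.φ x = st.φ x := by
  have hP : synth r.u 1 * r.compression x = r.compression x := r.isFrame_u.synth_one_mul_synth _
  rw [φ_apply, r.expectation_of_mem hx, complCorner_apply, r.φ_mul_synth_one hx,
    r.synth_one_mul_φ hx, hP]
  abel

theorem norm_φ_le {x : X} (hx : x ∈ B') : ‖r.φ x‖ ≤ ‖x‖ := by
  have hP := r.isFrame_u.isStarProjection_synth_one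
  have hstar : star (r.compression x) = star (r.compression x) * synth r.u 1 := by
    rw [compression, ← r.matrixSystem_v.transfer_star hx]
    exact (r.isFrame_u.synth_mul_synth_one _).symm
  have hmul : r.compression x = r.compression x * synth r.u 1 :=
    (r.isFrame_u.synth_mul_synth_one _).symm
  have hmem := r.expectation_mem x
  refine norm_add_le_of_star_mul_eq_zero (r.matrixSystem_v.norm_transfer_le r.isFrame_u hx) ?_ ?_ ?_
  · exact (norm_complCorner_le hP _).trans
      ((st.norm_le _ hmem).trans (r.norm_expectation_le hx))
  · rw [hstar, mul_assoc, LinearMap.comp_apply, mul_complCorner hP.isIdempotentElem, mul_zero]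
  · rw [hmul, mul_assoc, LinearMap.comp_apply, ← complCorner_star hP.isSelfAdjoint,
      mul_complCorner hP.isIdempotentElem, mul_zero]

theorem φ_mem (x : X) : r.φ x ∈ S' := by
  have hP : synth r.u 1 ∈ S' := r.isFrame_u.synth_mem 1
  have hφ : st.φ (r.expectation x) ∈ S' := r.le_right (st.map_mem _ (r.expectation_mem x))
  exact add_mem (r.isFrame_u.synth_mem _)
    (add_mem (sub_mem (sub_mem hφ (mul_mem hP hφ)) (mul_mem hφ hP)) (mul_mem hP (mul_mem hφ hP)))

theorem φ_star {x : X} (hx : x ∈ B') : r.φ (star x) = star (r.φ x) := by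
  rw [φ_apply, r.expectation_star hx, st.map_star _ (r.expectation_mem x),
    complCorner_star r.isFrame_u.isStarProjection_synth_one.isSelfAdjoint, compression,
    r.matrixSystem_v.transfer_star hx, ← star_add]
  rfl

theorem φ_mul (x : X) : r.φ x * synth r.u 1 = r.compression x := by
  rw [φ_apply, add_mul, complCorner_mul r.isFrame_u.isStarProjection_synth_one.isIdempotentElem,
    add_zero]
  exact r.isFrame_u.synth_mul_synth_one _

open Classical in
/-- The stage over `B'` and `S'` given by a refinement. -/
def next : Stage B' S' where
  κ := r.κ'
  J := r.J
  q := r.q'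
  cls := r.cls' ∘ r.label
  v := r.v
  Q := r.Q'
  u := r.u
  φ := r.φ
  matrixSystem := r.matrixSystem_v
  complete := r.synth_v_one
  isFrame := r.isFrame_u
  map_mem x _ := r.φ_mem x
  map_star _ := r.φ_star
  norm_le _ := r.norm_φ_le
  map_mul_synth_one x _ := r.φ_mul x

theorem next_φ {x : X} (hx : x ∈ B) : r.next.φ x = st.φ x :=
  r.φ_of_mem hx

theorem next_ψ {y : Y} (hy : y ∈ S) : r.next.ψ y = st.ψ y := by
  have hψ : st.ψ y = synth r.v (coord (fun _ : Unit => r.Q') (fun _ => ()) r.u y) := by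
    rw [r.coord_u hy, st.matrixSystem.synth_amplify r.matrixSystem_v r.synth_v_one r.le_left
      (fun _ => r.coord_v) r.cls_eq_of_label_eq]
    rfl
  exact hψ.symm

end Refinement

end Stage

end Stage

section Complemented

/-- `X` is isomorphic to a complemented subspace of `Y`: it embeds into `Y` with a bounded linear
left inverse. -/
def IsComplementedIn (𝕜 X Y : Type*) [NontriviallyNormedField 𝕜] [NormedAddCommGroup X]
    [NormedSpace 𝕜 X] [NormedAddCommGroup Y] [NormedSpace 𝕜 Y] : Prop :=
  ∃ (i : X →L[𝕜] Y) (r : Y →L[𝕜] X), Function.LeftInverse r i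

theorem IsComplementedIn.trans {𝕜 X Y Z : Type*} [NontriviallyNormedField 𝕜]
    [NormedAddCommGroup X] [NormedSpace 𝕜 X] [NormedAddCommGroup Y] [NormedSpace 𝕜 Y]
    [NormedAddCommGroup Z] [NormedSpace 𝕜 Z] (hXY : IsComplementedIn 𝕜 X Y)
    (hYZ : IsComplementedIn 𝕜 Y Z) : IsComplementedIn 𝕜 X Z := by
  obtain ⟨i, r, h⟩ := hXY
  obtain ⟨i', r', h'⟩ := hYZ
  exact ⟨i' ∘L i, r ∘L r', h'.comp h⟩

theorem exists_clm_eq_of_dense_iUnion {𝕜 X Y : Type*} [NontriviallyNormedField 𝕜]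
    [NormedAddCommGroup X] [NormedSpace 𝕜 X] [NormedAddCommGroup Y] [NormedSpace 𝕜 Y]
    [CompleteSpace Y] {V : ℕ → Submodule 𝕜 X} (hV : Monotone V)
    (hd : Dense (⋃ k, (V k : Set X))) {f : ℕ → X →ₗ[𝕜] Y} {C : ℝ}
    (hC : ∀ k, ∀ x ∈ V k, ‖f k x‖ ≤ C * ‖x‖) (hf : ∀ k, ∀ x ∈ V k, f (k + 1) x = f k x) :
    ∃ F : X →L[𝕜] Y, ∀ k, ∀ x ∈ V k, F x = f k x := by
  have hle {k l : ℕ} (hkl : k ≤ l) {x : X} (hx : x ∈ V k) : f l x = f k x := by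
    induction l, hkl using Nat.le_induction with
    | base => rfl
    | succ l hl ih => rw [hf l x (hV hl hx), ih]
  have heq {k l : ℕ} {x : X} (hk : x ∈ V k) (hl : x ∈ V l) : f k x = f l x :=
    (le_total k l).elim (fun h => (hle h hk).symm) fun h => hle h hl
  have hmem (x : X) : x ∈ ⨆ k, V k ↔ ∃ k, x ∈ V k :=
    Submodule.mem_iSup_of_directed _ hV.directed_le
  choose deg hdeg using fun x : ↥(⨆ k, V k) => (hmem x).1 x.2
  let g : ↥(⨆ k, V k) →ₗ[𝕜] Y :=
    { toFun := fun x => f (deg x) x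
      map_add' := fun x y => by
        have hx : (x : X) ∈ V (max (deg x) (deg y)) := hV (le_max_left _ _) (hdeg x)
        have hy : (y : X) ∈ V (max (deg x) (deg y)) := hV (le_max_right _ _) (hdeg y)
        rw [heq (hdeg (x + y)) (add_mem hx hy), heq (hdeg x) hx, heq (hdeg y) hy, Submodule.coe_add,
          map_add]
      map_smul' := fun c x => by
        rw [heq (hdeg (c • x)) (Submodule.smul_mem _ c (hdeg x)), Submodule.coe_smul, map_smul,
          RingHom.id_apply] }
  have hrange : DenseRange (⨆ k, V k).subtype := by
    refine hd.mono (Set.iUnion_subset fun k x hx => ?_)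
    exact ⟨⟨x, (hmem x).2 ⟨k, hx⟩⟩, rfl⟩
  refine ⟨g.extendOfNorm (⨆ k, V k).subtype, fun k x hx => ?_⟩
  have hx' : x ∈ ⨆ k, V k := (hmem x).2 ⟨k, hx⟩
  calc g.extendOfNorm (⨆ k, V k).subtype x = f (deg ⟨x, hx'⟩) x :=
        LinearMap.extendOfNorm_eq hrange ⟨C, fun z => hC _ _ (hdeg z)⟩ ⟨x, hx'⟩
    _ = f k x := heq (hdeg ⟨x, hx'⟩) hx

end Complemented

section Embedding

open scoped Matrix.Norms.L2Operator

/-- Each corner by a minimal projection of one of the subalgebras `S m` contains frames of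
arbitrary size for some later subalgebra. -/
def HasLargeCorners {Y : Type*} [NonUnitalCStarAlgebra Y] (S : ℕ → NonUnitalStarSubalgebra ℂ Y) :
    Prop :=
  ∀ m Q, IsMinimalProjection (S m) Q → ∀ N n, ∃ m', N ≤ m' ∧ m ≤ m' ∧
    ∃ (Q' : Y) (w : Fin n → Y), IsFrame (S m') Q' w ∧ ∀ i, Q * w i = w i

theorem IsMinimalProjection.isFrame {Y : Type*} [NonUnitalCStarAlgebra Y]
    {S : NonUnitalStarSubalgebra ℂ Y} {Q : Y} (hQ : IsMinimalProjection S Q) :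
    IsFrame S Q fun _ : Unit => Q where
  isMinimal _ := hQ
  inequivalent _ _ hkl := absurd rfl hkl
  mem _ := hQ.mem
  star_mul_eq_ite _ _ := by
    rw [if_pos rfl, hQ.isSelfAdjoint.star_eq, hQ.isIdempotentElem.eq]

variable {X Y : Type*} [NonUnitalCStarAlgebra Y]

namespace Stage

variable [CStarAlgebra X] {B B' : NonUnitalStarSubalgebra ℂ X}

/-- The stage in which `φ` is a homomorphism onto the matrices over a frame. -/
def ofTransfer {κ J : Type} [Finite κ] [DecidableEq κ] [Fintype J] [DecidableEq J] {q : κ → X}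
    {cls : J → κ} {v : J → X} {S : NonUnitalStarSubalgebra ℂ Y} {Q : Y} {u : J → Y}
    (h : MatrixSystem B q cls v) (hone : synth v 1 = 1) (hu : IsFrame S Q u) : Stage B S where
  κ := κ
  J := J
  q := q
  cls := cls
  v := v
  Q := Q
  u := u
  φ := transfer q cls v u
  matrixSystem := h
  complete := hone
  isFrame := hu
  map_mem _ _ := hu.synth_mem _
  map_star _ := h.transfer_star
  norm_le _ := h.norm_transfer_le hu
  map_mul_synth_one _ _ := hu.synth_mul_synth_one _

theorem isMinimalProjection_one_scalars [Nontrivial X] :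
    IsMinimalProjection (⊥ : StarSubalgebra ℂ X).toNonUnitalStarSubalgebra (1 : X) where
  toIsStarProjection := .one X
  mem := one_mem (⊥ : StarSubalgebra ℂ X)
  ne_zero := one_ne_zero
  exists_smul x hx := by
    obtain ⟨c, rfl⟩ := StarSubalgebra.mem_bot.1 hx
    exact ⟨c, by rw [one_mul, mul_one, Algebra.algebraMap_eq_smul_one]⟩

/-- The stage over the scalars given by a minimal projection. -/
def scalars [Nontrivial X] {S : NonUnitalStarSubalgebra ℂ Y} {Q : Y}
    (hQ : IsMinimalProjection S Q) : Stage (⊥ : StarSubalgebra ℂ X).toNonUnitalStarSubalgebra S :=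
  ofTransfer isMinimalProjection_one_scalars.isFrame (by simp [synth_one]) hQ.isFrame

variable {S : ℕ → NonUnitalStarSubalgebra ℂ Y}

theorem exists_refinement (hS : Monotone S) (hroom : HasLargeCorners S) [FiniteDimensional ℂ B']
    (hB : B ≤ B') {m : ℕ} (st : Stage B (S m)) (N : ℕ) :
    ∃ m', N ≤ m' ∧ m ≤ m' ∧ Nonempty (Refinement st B' (S m')) := by
  obtain ⟨n, κ', hκ', q', cls', g, hg, hqg, hsum⟩ := exists_matrixSystem_sum_eq (B := B')
    (fun k => (st.matrixSystem.isMinimal k).toIsStarProjection)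
    (fun k => hB (st.matrixSystem.isMinimal k).mem) fun k l hkl => by
      simpa [(st.matrixSystem.isMinimal k).isIdempotentElem.eq] using
        st.matrixSystem.inequivalent k l hkl _ (st.matrixSystem.isMinimal k).mem
  let e := Finite.equivFin (Σ k, Fin (n k))
  obtain ⟨m', hN, hm, Q', w, hw, hQw⟩ := hroom m st.Q (st.isFrame.isMinimal ()) N _
  exact ⟨m', hN, hm, ⟨{
    le_left := hB
    le_right := hS hm
    n, κ', q', cls', g
    matrixSystem := hg
    proj_mul := hqg
    sum_eq := hsum
    Q'
    w := w ∘ e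
    isFrame := hw.comp_injective e.injective
    frame_proj_mul := fun i => hQw (e i) }⟩⟩

theorem exists_sequence (hS : Monotone S) (hroom : HasLargeCorners S)
    {B : ℕ → NonUnitalStarSubalgebra ℂ X} (hB : Monotone B) [∀ k, FiniteDimensional ℂ (B k)]
    {m₀ : ℕ} (st₀ : Stage B' (S m₀)) (hB' : B' ≤ B 0) :
    ∃ m : ℕ → ℕ, Monotone m ∧ (∀ k, k ≤ m k) ∧ ∃ st : ∀ k, Stage (B k) (S (m k)), ∀ k,
      (∀ x ∈ B k, (st (k + 1)).φ x = (st k).φ x) ∧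
        ∀ y ∈ S (m k), (st (k + 1)).ψ y = (st k).ψ y := by
  obtain ⟨m₁, -, -, ⟨r₁⟩⟩ := st₀.exists_refinement hS hroom hB' 0
  choose m hN hm r using fun k (t : Σ m, Stage (B k) (S m)) =>
    t.2.exists_refinement hS hroom (hB k.le_succ) (k + 1)
  let t (k : ℕ) : Σ m, Stage (B k) (S m) :=
    Nat.rec ⟨m₁, r₁.next⟩ (fun k t => ⟨m k t, (r k t).some.next⟩) k
  refine ⟨fun k => (t k).1, monotone_nat_of_le_succ fun k => hm k (t k), fun k => ?_,
    fun k => (t k).2, fun k => ⟨fun x hx => (r k (t k)).some.next_φ hx,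
      fun y hy => (r k (t k)).some.next_ψ hy⟩⟩
  cases k with
  | zero => exact Nat.zero_le _
  | succ k => exact hN k (t k)

end Stage

theorem isComplementedIn_of_one_mem [CStarAlgebra X] [Nontrivial X]
    {B : ℕ → NonUnitalStarSubalgebra ℂ X} (hB : IsAFPresentation X B) (hone : (1 : X) ∈ B 0)
    {S : ℕ → NonUnitalStarSubalgebra ℂ Y} (hS : Monotone S) (hSd : Dense (⋃ k, (S k : Set Y)))
    (hroom : HasLargeCorners S) {m₀ : ℕ} {Q : Y} (hQ : IsMinimalProjection (S m₀) Q) :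
    IsComplementedIn ℂ X Y := by
  obtain ⟨hBmono, hBfin, hBd⟩ := hB
  have hscalars : (⊥ : StarSubalgebra ℂ X).toNonUnitalStarSubalgebra ≤ B 0 := fun x hx => by
    obtain ⟨c, rfl⟩ := StarSubalgebra.mem_bot.1 hx
    rw [Algebra.algebraMap_eq_smul_one]
    exact SMulMemClass.smul_mem c hone
  obtain ⟨m, hm, hkm, st, hst⟩ := Stage.exists_sequence hS hroom hBmono (.scalars hQ) hscalars
  obtain ⟨i, hi⟩ := exists_clm_eq_of_dense_iUnion (C := 1)
    (V := fun k => (B k).toNonUnitalSubalgebra.toSubmodule) (fun _ _ h => hBmono h) hBd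
    (f := fun k => (st k).φ) (by simpa using! fun k => (st k).norm_le) fun k => (hst k).1
  obtain ⟨r, hr⟩ := exists_clm_eq_of_dense_iUnion (C := 1)
    (V := fun k => (S (m k)).toNonUnitalSubalgebra.toSubmodule) (fun _ _ h => hS (hm h))
    (hSd.mono (Set.iUnion_mono fun k => hS (hkm k)))
    (f := fun k => (st k).ψ) (by simpa using! fun k _ => (st k).norm_ψ_le) fun k => (hst k).2
  refine ⟨i, r, fun x => ?_⟩
  refine hBd.induction (P := fun x => r (i x) = x) (fun x hx => ?_)
    (isClosed_eq (by fun_prop) continuous_id) x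
  obtain ⟨k, hk⟩ := Set.mem_iUnion.1 hx
  rw [hi k x hk, hr k _ ((st k).map_mem x hk), (st k).ψ_φ hk]

/-- The elements of the unitization whose nonscalar part lies in `B`. -/
def unitizationSubalgebra [NonUnitalCStarAlgebra X] (B : NonUnitalStarSubalgebra ℂ X) :
    NonUnitalStarSubalgebra ℂ (Unitization ℂ X) where
  carrier := {x | x.snd ∈ B}
  add_mem' hx hy := add_mem (S := NonUnitalStarSubalgebra ℂ X) hx hy
  zero_mem' := zero_mem B
  mul_mem' {x y} hx hy := by
    have hx : x.snd ∈ B := hx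
    have hy : y.snd ∈ B := hy
    exact add_mem (add_mem (SMulMemClass.smul_mem _ hy) (SMulMemClass.smul_mem _ hx))
      (mul_mem hx hy)
  smul_mem' c _ hx := SMulMemClass.smul_mem (S := NonUnitalStarSubalgebra ℂ X) c hx
  star_mem' hx := star_mem (S := NonUnitalStarSubalgebra ℂ X) hx

theorem IsAFPresentation.unitization [NonUnitalCStarAlgebra X]
    {B : ℕ → NonUnitalStarSubalgebra ℂ X} (hB : IsAFPresentation X B) :
    IsAFPresentation (Unitization ℂ X) fun k => unitizationSubalgebra (B k) := by
  obtain ⟨hmono, hfin, hd⟩ := hB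
  refine ⟨fun k l hkl x hx => hmono hkl hx, fun k => ?_, fun x => ?_⟩
  · let f : unitizationSubalgebra (B k) →ₗ[ℂ] ℂ × B k :=
      { toFun := fun x => (x.1.fst, ⟨x.1.snd, x.2⟩)
        map_add' := fun _ _ => rfl
        map_smul' := fun _ _ => rfl }
    refine FiniteDimensional.of_injective f fun x y hxy => Subtype.ext (Unitization.ext ?_ ?_)
    · exact congrArg (fun z : ℂ × B k => z.1) hxy
    · exact congrArg (fun z : ℂ × B k => (z.2 : X)) hxy
  · rw [← Unitization.inl_fst_add_inr_snd_eq x]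
    refine map_mem_closure (f := fun y : X => Unitization.inl x.fst + (y : Unitization ℂ X))
      (continuous_const.add Unitization.continuous_inr) (hd x.snd) fun y hy => ?_
    obtain ⟨k, hk⟩ := Set.mem_iUnion.1 hy
    refine Set.mem_iUnion.2 ⟨k, ?_⟩
    change (Unitization.inl x.fst + (y : Unitization ℂ X)).snd ∈ B k
    simpa using hk

theorem isComplementedIn_of_hasLargeCorners [NonUnitalCStarAlgebra X]
    {B : ℕ → NonUnitalStarSubalgebra ℂ X} (hB : IsAFPresentation X B)
    {S : ℕ → NonUnitalStarSubalgebra ℂ Y} (hS : Monotone S) (hSd : Dense (⋃ k, (S k : Set Y)))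
    (hroom : HasLargeCorners S) {m : ℕ} {Q : Y} (hQ : IsMinimalProjection (S m) Q) :
    IsComplementedIn ℂ X Y := by
  have hX : IsComplementedIn ℂ X (Unitization ℂ X) :=
    ⟨⟨Unitization.inrHom ℂ ℂ X, Unitization.continuous_inr⟩,
      ⟨Unitization.sndHom ℂ ℂ X, Unitization.continuous_snd⟩, fun _ => rfl⟩
  exact hX.trans (isComplementedIn_of_one_mem hB.unitization (zero_mem (B 0)) hS hSd hroom hQ)

end Embedding

section LargeCorners

variable {Y : Type*} [NonUnitalCStarAlgebra Y] {S : ℕ → NonUnitalStarSubalgebra ℂ Y} {Q : Y}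

theorem IsMinimalProjection.of_le {B B' : NonUnitalStarSubalgebra ℂ Y} (hB : B ≤ B')
    (hQ : IsMinimalProjection B' Q) (hQB : Q ∈ B) : IsMinimalProjection B Q where
  toIsStarProjection := hQ.toIsStarProjection
  mem := hQB
  ne_zero := hQ.ne_zero
  exists_smul x hx := hQ.exists_smul x (hB hx)

theorem IsFrame.mul {J J' : Type*} [DecidableEq J] [DecidableEq J']
    {B B' : NonUnitalStarSubalgebra ℂ Y} {Q' : Y} {u : J → Y} {w : J' → Y} (hu : IsFrame B Q u)
    (hw : IsFrame B' Q' w) (hB : B ≤ B') (hQw : ∀ j, Q * w j = w j) :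
    IsFrame B' Q' fun a : J × J' => u a.1 * w a.2 :=
  MatrixSystem.mul hu hw hB (fun _ _ => Prod.ext) fun a => hQw a.2

theorem exists_not_isMinimalProjection (hS : Monotone S) (hSd : Dense (⋃ k, (S k : Set Y)))
    (m : ℕ) (hQ : ¬ IsMinimalProjection ⊤ Q) :
    ∃ k ≥ m, ¬ IsMinimalProjection (S k) Q := by
  by_contra! hmin
  obtain ⟨hQp, -, hQ0, -⟩ := hmin m le_rfl
  refine hQ ⟨hQp, trivial, hQ0, fun x _ => ?_⟩
  suffices h : Q * x * Q ∈ (ℂ ∙ Q) by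
    obtain ⟨c, hc⟩ := Submodule.mem_span_singleton.1 h
    exact ⟨c, hc.symm⟩
  refine hSd.induction (P := fun x => Q * x * Q ∈ (ℂ ∙ Q)) (fun x hx => ?_)
    ((Submodule.closed_of_finiteDimensional (ℂ ∙ Q)).preimage (by fun_prop)) x
  obtain ⟨k, hk⟩ := Set.mem_iUnion.1 hx
  obtain ⟨c, hc⟩ := (hmin (max m k) (le_max_left _ _)).exists_smul x (hS (le_max_right _ _) hk)
  exact Submodule.mem_span_singleton.2 ⟨c, hc.symm⟩

theorem exists_partialIsometry_of_mul_mul_ne_zero {B : NonUnitalStarSubalgebra ℂ Y}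
    [FiniteDimensional ℂ B] {p r x : Y} (hp : IsStarProjection p) (hpB : p ∈ B)
    (hr : IsStarProjection r) (hrB : r ∈ B) (hx : x ∈ B) (h : p * x * r ≠ 0) :
    ∃ e w, IsMinimalProjection B e ∧ r * e = e ∧ w ∈ B ∧ star w * w = e ∧ p * w = w := by
  obtain ⟨s, hs⟩ := exists_isMinimalDecomposition hp hpB
  obtain ⟨t, ht⟩ := exists_isMinimalDecomposition hr hrB
  obtain ⟨f, hf, e, he, hfe⟩ : ∃ f ∈ s, ∃ e ∈ t, f * x * e ≠ 0 := by
    by_contra! hzero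
    refine h ?_
    rw [← hs.sum_eq, ← ht.sum_eq, Finset.sum_mul, Finset.sum_mul_sum]
    exact Finset.sum_eq_zero fun f hf => Finset.sum_eq_zero fun e he => hzero f hf e he
  obtain ⟨w, hwB, hwe, hwf⟩ := (hs.minimal f hf).exists_partialIsometry (ht.minimal e he) hx hfe
  have hw : f * w = w := by
    rw [← hwf, mul_assoc, hwe, mul_eq_self_of_star_mul_self_eq (ht.minimal e he).1 hwe]
  refine ⟨e, w, ht.minimal e he, ht.mul_left he, hwB, hwe, ?_⟩
  rw [← hw, ← mul_assoc, hs.mul_left hf]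

theorem exists_isFrame_two (hS : Monotone S) [∀ k, FiniteDimensional ℂ (S k)]
    (hSd : Dense (⋃ k, (S k : Set Y)))
    (hprime : ∀ m, ∀ a ∈ S m, ∀ b ∈ S m, a ≠ 0 → b ≠ 0 → ∃ x, a * x * b ≠ 0) {m : ℕ}
    (hQm : IsMinimalProjection (S m) Q) (hQ : ¬ IsMinimalProjection ⊤ Q) (N : ℕ) :
    ∃ m', N ≤ m' ∧ m ≤ m' ∧ ∃ (Q' : Y) (w : Fin 2 → Y), IsFrame (S m') Q' w ∧
      ∀ i, Q * w i = w i := by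
  obtain ⟨k, hmk, hk⟩ := exists_not_isMinimalProjection hS hSd m hQ
  have hQk := hS hmk hQm.mem
  obtain ⟨p, hpk, hp, hp0, hpQ, hQp⟩ :=
    exists_proper_subprojection hQm.toIsStarProjection hQk hQm.ne_zero hk
  have hr : IsStarProjection (Q - p) := hp.sub_of_mul_eq_right hQm.toIsStarProjection hQp
  obtain ⟨x₀, hx₀⟩ := hprime k p hpk (Q - p) (sub_mem hQk hpk) hp0 (sub_ne_zero.2 hpQ.symm)
  obtain ⟨x, hx, hx0⟩ := hSd.exists_mem_open
    (isOpen_ne.preimage (f := fun x => p * x * (Q - p)) (by fun_prop)) ⟨x₀, hx₀⟩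
  obtain ⟨l, hxl⟩ := Set.mem_iUnion.1 hx
  set m' := max N (max k l)
  have hkm' : k ≤ m' := (le_max_left k l).trans (le_max_right _ _)
  have hlm' : l ≤ m' := (le_max_right k l).trans (le_max_right _ _)
  obtain ⟨e, w, he, hre, hwm', hwe, hpw⟩ := exists_partialIsometry_of_mul_mul_ne_zero hp
    (hS hkm' hpk) hr (hS hkm' (sub_mem hQk hpk)) (hS hlm' hxl) hx0
  have her := mul_eq_left_of_mul_eq_right he.isSelfAdjoint hr.isSelfAdjoint hre
  have hew : e * w = 0 := by
    rw [← her, ← hpw, mul_assoc, ← mul_assoc _ p, sub_mul, hQp, hp.isIdempotentElem.eq, sub_self,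
      zero_mul, mul_zero]
  have hwe0 : star w * e = 0 := by simpa [he.isSelfAdjoint.star_eq] using congrArg star hew
  have hQe : Q * e = e := by
    rw [← hre, ← mul_assoc, mul_sub, hQm.isIdempotentElem.eq, hQp]
  have hQw : Q * w = w := by rw [← hpw, ← mul_assoc, hQp]
  refine ⟨m', le_max_left _ _, hmk.trans hkm', e, ![w, e], ⟨fun _ => he,
    fun _ _ h => absurd rfl h, ?_, ?_⟩, ?_⟩
  · simp [Fin.forall_fin_two, hwm', he.mem]
  · simp [Fin.forall_fin_two, hwe, hew, hwe0, he.isSelfAdjoint.star_eq, he.isIdempotentElem.eq]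
  · simp [Fin.forall_fin_two, hQe, hQw]

theorem hasLargeCorners_of_not_isMinimalProjection_top (hS : Monotone S)
    [∀ k, FiniteDimensional ℂ (S k)] (hSd : Dense (⋃ k, (S k : Set Y)))
    (hprime : ∀ m, ∀ a ∈ S m, ∀ b ∈ S m, a ≠ 0 → b ≠ 0 → ∃ x, a * x * b ≠ 0)
    (hmin : ∀ m, ∀ Q ∈ S m, ¬ IsMinimalProjection ⊤ Q) :
    HasLargeCorners S := by
  intro m Q hQ N n
  suffices ∃ m', N ≤ m' ∧ m ≤ m' ∧ ∃ (Q' : Y) (w : Fin (2 ^ n) → Y), IsFrame (S m') Q' w ∧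
      ∀ i, Q * w i = w i by
    obtain ⟨m', hN, hm, Q', w, hw, hQw⟩ := this
    exact ⟨m', hN, hm, Q', w ∘ Fin.castLE n.lt_two_pow_self.le,
      hw.comp_injective (Fin.castLE_injective _), fun i => hQw _⟩
  induction n with
  | zero =>
    obtain ⟨m', hN, hm, Q', w, hw, hQw⟩ := exists_isFrame_two hS hSd hprime hQ (hmin m Q hQ.mem) N
    exact ⟨m', hN, hm, Q', fun _ => w 0, hw.comp_injective (f := fun _ : Fin 1 => (0 : Fin 2))
      (fun _ _ _ => Subsingleton.elim _ _), fun _ => hQw 0⟩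
  | succ n ih =>
    obtain ⟨m', hN, hm, Q', u, hu, hQu⟩ := ih
    obtain ⟨m'', -, hm', Q'', w, hw, hQw⟩ :=
      exists_isFrame_two hS hSd hprime (hu.isMinimal ()) (hmin m' Q' (hu.isMinimal ()).mem) N
    let e := (finCongr (pow_succ 2 n)).trans finProdFinEquiv.symm
    refine ⟨m'', hN.trans hm', hm.trans hm', Q'', _,
      (hu.mul hw (hS hm') hQw).comp_injective e.injective, fun i => ?_⟩
    rw [Function.comp_apply, ← mul_assoc, hQu]

end LargeCorners

section Pelczynski

open Filter Topology ZeroAtInfty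

variable {𝕜 α X Y : Type*} [NontriviallyNormedField 𝕜] [TopologicalSpace α]
  [NormedAddCommGroup X] [NormedSpace 𝕜 X] [NormedAddCommGroup Y] [NormedSpace 𝕜 Y]

theorem c0_tendsto_atTop (f : C₀(ℕ, X)) : Tendsto f atTop (𝓝 0) := by
  simpa [cocompact_eq_cofinite, Nat.cofinite_eq_atTop] using f.zero_at_infty'

theorem c0_norm_apply_le (f : C₀(α, X)) (a : α) : ‖f a‖ ≤ ‖f‖ :=
  f.toBCF.norm_coe_le_norm a

theorem c0_norm_le {f : C₀(α, X)} {C : ℝ} (hC : 0 ≤ C) (h : ∀ a, ‖f a‖ ≤ C) : ‖f‖ ≤ C :=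
  (BoundedContinuousFunction.norm_le hC).2 h

/-- A null sequence as an element of `C₀(ℕ, X)`. -/
def c0OfTendsto (g : ℕ → X) (hg : Tendsto g atTop (𝓝 0)) : C₀(ℕ, X) where
  toFun := g
  continuous_toFun := continuous_of_discreteTopology
  zero_at_infty' := by rwa [cocompact_eq_cofinite, Nat.cofinite_eq_atTop]

@[simp]
theorem c0OfTendsto_apply (g : ℕ → X) (hg : Tendsto g atTop (𝓝 0)) (n : ℕ) :
    c0OfTendsto g hg n = g n :=
  rfl

/-- Postcomposition with a bounded operator, as an operator between spaces of functions vanishing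
at infinity. -/
def c0Map (T : X →L[𝕜] Y) : C₀(α, X) →L[𝕜] C₀(α, Y) :=
  LinearMap.mkContinuous
    { toFun := fun f =>
        { toFun := fun a => T (f a)
          continuous_toFun := T.continuous.comp f.continuous
          zero_at_infty' := (T.continuous.tendsto' 0 0 (map_zero T)).comp f.zero_at_infty' }
      map_add' := fun f g => by ext; simp
      map_smul' := fun c f => by ext; simp }
    ‖T‖ fun f => c0_norm_le (by positivity) fun a => T.le_opNorm_of_le (c0_norm_apply_le f a)

@[simp]
theorem c0Map_apply (T : X →L[𝕜] Y) (f : C₀(α, X)) (a : α) : c0Map T f a = T (f a) :=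
  rfl

/-- The first entry of a null sequence together with its left shift. -/
def c0Uncons : C₀(ℕ, X) →L[𝕜] X × C₀(ℕ, X) :=
  LinearMap.mkContinuous
    { toFun := fun f =>
        (f 0, c0OfTendsto (fun n => f (n + 1))
          ((tendsto_add_atTop_iff_nat 1).2 (c0_tendsto_atTop f)))
      map_add' := fun f g => by ext <;> simp
      map_smul' := fun c f => by ext <;> simp }
    1 fun f => by
      rw [one_mul]
      exact max_le (c0_norm_apply_le f 0)
        (c0_norm_le (norm_nonneg f) fun n => c0_norm_apply_le f (n + 1))

/-- The null sequence with a given first entry and a given left shift. -/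
def c0Cons : X × C₀(ℕ, X) →L[𝕜] C₀(ℕ, X) :=
  LinearMap.mkContinuous
    { toFun := fun p => c0OfTendsto (fun n => Nat.casesOn n p.1 p.2)
        ((tendsto_add_atTop_iff_nat 1).1 (c0_tendsto_atTop p.2))
      map_add' := fun f g => by ext n; cases n <;> simp
      map_smul' := fun c f => by ext n; cases n <;> simp }
    1 fun p => by
      rw [one_mul]
      refine c0_norm_le (norm_nonneg p) fun n => ?_
      cases n with
      | zero => exact norm_fst_le p
      | succ k => exact (c0_norm_apply_le p.2 k).trans (norm_snd_le p)

variable (𝕜 X) in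
/-- `C₀(ℕ, X) ≅ X × C₀(ℕ, X)`. -/
def c0UnconsEquiv : C₀(ℕ, X) ≃L[𝕜] X × C₀(ℕ, X) :=
  .equivOfInverse c0Uncons c0Cons (fun f => by ext n; cases n <;> rfl) fun _ => rfl

variable (𝕜 α X Y) in
/-- `C₀(α, X × Y) ≅ C₀(α, X) × C₀(α, Y)`. -/
def c0ProdEquiv : C₀(α, X × Y) ≃L[𝕜] C₀(α, X) × C₀(α, Y) :=
  .equivOfInverse ((c0Map (.fst 𝕜 X Y)).prod (c0Map (.snd 𝕜 X Y)))
    ((c0Map (.inl 𝕜 X Y)).coprod (c0Map (.inr 𝕜 X Y)))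
    (fun f => by ext <;> simp) fun p => by ext <;> simp

/-- The equivalence `C₀(α, X) ≅ C₀(α, Y)` induced by an equivalence `X ≅ Y`. -/
def c0Congr (e : X ≃L[𝕜] Y) : C₀(α, X) ≃L[𝕜] C₀(α, Y) :=
  .equivOfInverse (c0Map (e : X →L[𝕜] Y)) (c0Map (e.symm : Y →L[𝕜] X))
    (fun f => by ext; simp) fun f => by ext; simp

theorem IsComplementedIn.exists_equiv_prod (h : IsComplementedIn 𝕜 X Y) :
    ∃ W : Submodule 𝕜 Y, Nonempty (Y ≃L[𝕜] X × W) := by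
  obtain ⟨i, r, hri⟩ := h
  exact ⟨_, ⟨.equivOfRightInverse r i hri⟩⟩

/-- With `Y ≅ X × W` and `Y ≅ C₀(ℕ, Y) × V`, the copy of `C₀(ℕ, X)` inside `C₀(ℕ, Y)` absorbs a
further summand `X`. -/
theorem IsComplementedIn.nonempty_prod_equiv (hXY : IsComplementedIn 𝕜 X Y)
    (hc0 : IsComplementedIn 𝕜 C₀(ℕ, Y) Y) : Nonempty ((X × Y) ≃L[𝕜] Y) := by
  obtain ⟨W, ⟨eX⟩⟩ := hXY.exists_equiv_prod
  obtain ⟨V, ⟨eC⟩⟩ := hc0.exists_equiv_prod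
  let eXW : C₀(ℕ, Y) ≃L[𝕜] C₀(ℕ, X) × C₀(ℕ, W) := (c0Congr eX).trans (c0ProdEquiv 𝕜 ℕ X W)
  let eC0 : C₀(ℕ, Y) ≃L[𝕜] X × C₀(ℕ, Y) :=
    eXW.trans <| ((c0UnconsEquiv 𝕜 X).prodCongr (.refl 𝕜 _)).trans <|
      (ContinuousLinearEquiv.prodAssoc 𝕜 _ _ _).trans <|
      (ContinuousLinearEquiv.refl 𝕜 X).prodCongr eXW.symm
  have eY : Y ≃L[𝕜] X × Y :=
    eC.trans <| (eC0.prodCongr (.refl 𝕜 _)).trans <|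
      (ContinuousLinearEquiv.prodAssoc 𝕜 _ _ _).trans <|
      (ContinuousLinearEquiv.refl 𝕜 X).prodCongr eC.symm
  exact ⟨eY.symm⟩

theorem IsComplementedIn.nonempty_equiv (hXY : IsComplementedIn 𝕜 X Y)
    (hYX : IsComplementedIn 𝕜 Y X) (hc0 : IsComplementedIn 𝕜 C₀(ℕ, Y) Y) :
    Nonempty (X ≃L[𝕜] Y) := by
  obtain ⟨eXY⟩ := hXY.nonempty_prod_equiv hc0
  have hYY : IsComplementedIn 𝕜 Y Y := ⟨.id 𝕜 Y, .id 𝕜 Y, fun _ => rfl⟩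
  obtain ⟨eYY⟩ := hYY.nonempty_prod_equiv hc0
  obtain ⟨W, ⟨eX⟩⟩ := hYX.exists_equiv_prod
  have eYX : X ≃L[𝕜] Y × X :=
    eX.trans <| (eYY.symm.prodCongr (.refl 𝕜 _)).trans <|
      (ContinuousLinearEquiv.prodAssoc 𝕜 _ _ _).trans <|
      (ContinuousLinearEquiv.refl 𝕜 Y).prodCongr eX.symm
  exact ⟨eYX.trans <| (ContinuousLinearEquiv.prodComm 𝕜 _ _).trans eXY⟩

end Pelczynski

section NullSequences

open Filter Topology ZeroAtInfty

variable {Y : Type*} [NonUnitalCStarAlgebra Y] {B : NonUnitalStarSubalgebra ℂ Y}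
  {S : ℕ → NonUnitalStarSubalgebra ℂ Y} {k : ℕ} {f : C₀(ℕ, Y)}

/-- The algebra of sequences in `B` that vanish from index `k` on. -/
def c0Subalgebra (B : NonUnitalStarSubalgebra ℂ Y) (k : ℕ) :
    NonUnitalStarSubalgebra ℂ C₀(ℕ, Y) where
  carrier := {f | (∀ n, f n ∈ B) ∧ ∀ n, k ≤ n → f n = 0}
  add_mem' hf hg := ⟨fun n => add_mem (hf.1 n) (hg.1 n), fun n hn => by
    rw [ZeroAtInftyContinuousMap.add_apply, hf.2 n hn, hg.2 n hn, add_zero]⟩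
  zero_mem' := ⟨fun _ => zero_mem B, fun _ _ => rfl⟩
  mul_mem' hf hg := ⟨fun n => mul_mem (hf.1 n) (hg.1 n), fun n hn => by
    rw [ZeroAtInftyContinuousMap.mul_apply, hf.2 n hn, zero_mul]⟩
  smul_mem' c f hf := ⟨fun n => SMulMemClass.smul_mem c (hf.1 n), fun n hn => by
    rw [ZeroAtInftyContinuousMap.smul_apply, hf.2 n hn, smul_zero]⟩
  star_mem' hf := ⟨fun n => star_mem (hf.1 n), fun n hn => by
    rw [ZeroAtInftyContinuousMap.star_apply, hf.2 n hn, star_zero]⟩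

theorem mem_c0Subalgebra : f ∈ c0Subalgebra B k ↔ (∀ n, f n ∈ B) ∧ ∀ n, k ≤ n → f n = 0 :=
  Iff.rfl

instance finiteDimensional_c0Subalgebra [FiniteDimensional ℂ B] :
    FiniteDimensional ℂ (c0Subalgebra B k) := by
  let T : c0Subalgebra B k →ₗ[ℂ] (Fin k → B) :=
    { toFun := fun f i => ⟨f.1 i, f.2.1 i⟩
      map_add' := fun _ _ => rfl
      map_smul' := fun _ _ => rfl }
  refine FiniteDimensional.of_injective T fun f g hfg => Subtype.ext ?_
  ext n
  by_cases hn : n < k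
  · exact congrArg Subtype.val (congrFun hfg ⟨n, hn⟩)
  · rw [f.2.2 n (not_lt.1 hn), g.2.2 n (not_lt.1 hn)]

theorem dense_iUnion_c0Subalgebra (hS : Monotone S) (hSd : Dense (⋃ k, (S k : Set Y))) :
    Dense (⋃ k, (c0Subalgebra (S k) k : Set C₀(ℕ, Y))) := by
  refine fun f => Metric.mem_closure_iff.2 fun ε hε => ?_
  obtain ⟨N, hN⟩ := eventually_atTop.1
    (Metric.tendsto_nhds.1 (c0_tendsto_atTop f) (ε / 2) (half_pos hε))
  choose y hy hfy using fun n => Metric.mem_closure_iff.1 (hSd (f n)) _ (half_pos hε)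
  choose k hk using fun n => Set.mem_iUnion.1 (hy n)
  let K := max N ((Finset.range N).sup k)
  let g : ℕ → Y := fun n => if n < N then y n else 0
  have hg0 (n : ℕ) (hn : N ≤ n) : g n = 0 := if_neg hn.not_gt
  have hgS (n : ℕ) : g n ∈ S K := by
    by_cases hn : n < N
    · have hkK : k n ≤ K := (Finset.le_sup (Finset.mem_range.2 hn)).trans (le_max_right _ _)
      rw [show g n = y n from if_pos hn]
      exact hS hkK (hk n)
    · rw [hg0 n (not_lt.1 hn)]
      exact zero_mem _
  let g₀ := c0OfTendsto g (tendsto_const_nhds.congr' <| (eventually_ge_atTop N).mono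
    fun n hn => (hg0 n hn).symm)
  refine ⟨g₀, Set.mem_iUnion.2 ⟨K, mem_c0Subalgebra.2 ⟨hgS, fun n hn =>
    hg0 n ((le_max_left _ _).trans hn)⟩⟩, (half_lt_self hε).trans_le' ?_⟩
  rw [dist_eq_norm]
  refine c0_norm_le (half_pos hε).le fun n => ?_
  by_cases hn : n < N
  · simpa [g₀, g, hn, dist_eq_norm] using (hfy n).le
  · simpa [g₀, g, hn, dist_eq_norm] using (hN n (not_lt.1 hn)).le

theorem IsAFPresentation.c0 (hS : IsAFPresentation Y S) :
    IsAFPresentation C₀(ℕ, Y) fun k => c0Subalgebra (S k) k := by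
  obtain ⟨hmono, hfin, hd⟩ := hS
  exact ⟨fun k l hkl f hf => ⟨fun n => hmono hkl (hf.1 n), fun n hn => hf.2 n (hkl.trans hn)⟩,
    fun k => inferInstance, dense_iUnion_c0Subalgebra hmono hd⟩

end NullSequences

section Fermion

theorem exists_matrix_mul_mul_ne_zero {n R : Type*} [Fintype n] [Semiring R]
    [NoZeroDivisors R] {M N : Matrix n n R} (hM : M ≠ 0) (hN : N ≠ 0) : ∃ P, M * P * N ≠ 0 := by
  classical
  simp only [ne_eq, ← Matrix.ext_iff, not_forall, Matrix.zero_apply] at hM hN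
  obtain ⟨i, j, hij⟩ := hM
  obtain ⟨k, l, hkl⟩ := hN
  refine ⟨Matrix.single j k 1, fun h => mul_ne_zero hij hkl ?_⟩
  simpa [Matrix.mul_apply, Matrix.single_apply, ite_and] using congrFun₂ h i l

theorem eq_top_of_isMinimalProjection_top {X : Type*} [CStarAlgebra X]
    {B : NonUnitalStarSubalgebra ℂ X} [FiniteDimensional ℂ B] (hone : (1 : X) ∈ B)
    (hprime : ∀ a ∈ B, ∀ b ∈ B, a ≠ 0 → b ≠ 0 → ∃ x ∈ B, a * x * b ≠ 0) {q : X}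
    (hqB : q ∈ B) (hq : IsMinimalProjection ⊤ q) : B = ⊤ := by
  have hqmin := hq.of_le (B' := ⊤) (fun _ _ => NonUnitalStarAlgebra.mem_top) hqB
  obtain ⟨s, hs⟩ := exists_isMinimalDecomposition (.one X) hone
  have hequiv (p : X) (hp : p ∈ s) : ∃ w ∈ B, star w * w = q ∧ w * star w = p := by
    obtain ⟨x, hx, hx0⟩ := hprime p (hs.minimal p hp).mem q hqB (hs.minimal p hp).ne_zero hq.ne_zero
    exact (hs.minimal p hp).exists_partialIsometry hqmin hx hx0
  choose! w hwB hwq hwp using hequiv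
  refine top_unique fun x _ => ?_
  have hx : x = ∑ p ∈ s, ∑ p' ∈ s, p * x * p' := by
    rw [← Finset.sum_mul_sum, ← Finset.sum_mul, hs.sum_eq, one_mul, mul_one]
  rw [hx]
  refine sum_mem fun p hp => sum_mem fun p' hp' => ?_
  obtain ⟨c, hc⟩ := hq.exists_smul (star (w p) * x * w p') trivial
  have hw := mul_eq_self_of_star_mul_self_eq hq.toIsStarProjection (hwq p hp)
  have hw' : q * star (w p') = star (w p') := by
    simpa [hq.isSelfAdjoint.star_eq] using
      congrArg star (mul_eq_self_of_star_mul_self_eq hq.toIsStarProjection (hwq p' hp'))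
  have hcorner : p * x * p' = w p * (c • q) * star (w p') := by
    calc p * x * p' = w p * q * star (w p) * x * (w p' * (q * star (w p'))) := by
          rw [hw, hw', hwp p hp, hwp p' hp']
      _ = w p * (q * (star (w p) * x * w p') * q) * star (w p') := by simp only [mul_assoc]
      _ = w p * (c • q) * star (w p') := by rw [hc]
  rw [hcorner]
  exact mul_mem (mul_mem (hwB p hp) (SMulMemClass.smul_mem c hqB)) (star_mem (hwB p' hp'))

variable {F : Type*} [CStarAlgebra F] {S : ℕ → StarSubalgebra ℂ F}

theorem exists_mem_mul_mul_ne_zero {n : Type*} [Fintype n] {B : StarSubalgebra ℂ F}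
    (e : B ≃⋆ₐ[ℂ] Matrix n n ℂ) {a b : F} (ha : a ∈ B) (hb : b ∈ B) (ha0 : a ≠ 0) (hb0 : b ≠ 0) :
    ∃ x ∈ B, a * x * b ≠ 0 := by
  lift a to B using ha
  lift b to B using hb
  obtain ⟨P, hP⟩ := exists_matrix_mul_mul_ne_zero
    ((map_ne_zero_iff e e.injective).2 (Subtype.coe_ne_coe.1 ha0 : a ≠ 0))
    ((map_ne_zero_iff e e.injective).2 (Subtype.coe_ne_coe.1 hb0 : b ≠ 0))
  refine ⟨e.symm P, (e.symm P).2, fun h => hP ?_⟩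
  have h0 : a * e.symm P * b = 0 := Subtype.ext h
  simpa using congrArg e h0

theorem finrank_of_starAlgEquiv_matrix {n : Type*} [Fintype n] {B : StarSubalgebra ℂ F}
    (e : B ≃⋆ₐ[ℂ] Matrix n n ℂ) :
    FiniteDimensional ℂ B ∧ Module.finrank ℂ B = Fintype.card n * Fintype.card n := by
  classical
  let e' : B ≃ₗ[ℂ] Matrix n n ℂ := e.toAlgEquiv.toLinearEquiv
  exact ⟨Module.Finite.equiv e'.symm, by simp [e'.finrank_eq, Module.finrank_matrix]⟩

theorem isAFPresentation_of_starAlgEquiv_matrix {d : ℕ → ℕ} (hmono : Monotone S)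
    (hiso : ∀ k, Nonempty (S k ≃⋆ₐ[ℂ] Matrix (Fin (d k)) (Fin (d k)) ℂ))
    (hdense : Dense (⋃ k, (S k : Set F))) :
    IsAFPresentation F fun k => (S k).toNonUnitalStarSubalgebra :=
  ⟨fun _ _ h => hmono h, fun k => (finrank_of_starAlgEquiv_matrix (hiso k).some).1, hdense⟩

theorem hasLargeCorners_of_starAlgEquiv_matrix {d : ℕ → ℕ} (hd : StrictMono d)
    (hmono : Monotone S) (hiso : ∀ k, Nonempty (S k ≃⋆ₐ[ℂ] Matrix (Fin (d k)) (Fin (d k)) ℂ))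
    (hdense : Dense (⋃ k, (S k : Set F))) :
    HasLargeCorners fun k => (S k).toNonUnitalStarSubalgebra := by
  let e k := (hiso k).some
  obtain ⟨hmono', hfin, -⟩ := isAFPresentation_of_starAlgEquiv_matrix hmono hiso hdense
  have hfin' k : FiniteDimensional ℂ (S k) := hfin k
  have hprime k : ∀ a ∈ S k, ∀ b ∈ S k, a ≠ 0 → b ≠ 0 → ∃ x ∈ S k, a * x * b ≠ 0 :=
    fun _ ha _ hb => exists_mem_mul_mul_ne_zero (e k) ha hb
  refine hasLargeCorners_of_not_isMinimalProjection_top hmono' hdense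
    (fun k a ha b hb ha0 hb0 => (hprime k a ha b hb ha0 hb0).imp fun _ => And.right)
    fun m Q hQ hQtop => ?_
  have htop : (S m).toNonUnitalStarSubalgebra = ⊤ :=
    eq_top_of_isMinimalProjection_top (one_mem (S m)) (hprime m) hQ hQtop
  have hle : Subalgebra.toSubmodule (S (m + 1)).toSubalgebra ≤
      Subalgebra.toSubmodule (S m).toSubalgebra := fun x _ =>
    (htop ▸ NonUnitalStarAlgebra.mem_top : x ∈ (S m).toNonUnitalStarSubalgebra)
  have hrank : d (m + 1) * d (m + 1) ≤ d m * d m := by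
    have hcard k : Module.finrank ℂ (Subalgebra.toSubmodule (S k).toSubalgebra) = d k * d k :=
      (finrank_of_starAlgEquiv_matrix (e k)).2.trans (by rw [Fintype.card_fin])
    rw [← hcard, ← hcard]
    exact Submodule.finrank_mono hle
  exact absurd (hd m.lt_succ_self) (Nat.mul_self_le_mul_self_iff.1 hrank).not_gt

end Fermion

section CompactOperator

open InnerProductSpace

variable {𝕜 E G : Type*} [RCLike 𝕜] [NormedAddCommGroup E] [InnerProductSpace 𝕜 E]
  [NormedAddCommGroup G] [InnerProductSpace 𝕜 G]

theorem isCompactOperator_rankOne (x : G) (y : E) : IsCompactOperator (rankOne 𝕜 x y) :=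
  (isCompactOperator_of_locallyCompactSpace_rng
    (ContinuousLinearMap.toSpanSingleton 𝕜 x)).comp_clm (innerSL 𝕜 y)

theorem exists_finiteDimensional_norm_sub_starProjection_comp_le {T : E →L[𝕜] G}
    (hT : IsCompactOperator T) {ε : ℝ} (hε : 0 < ε) :
    ∃ (U : Submodule 𝕜 G) (_ : FiniteDimensional 𝕜 U), ‖T - U.starProjection ∘L T‖ ≤ ε := by
  obtain ⟨C, hC, hTC⟩ :=
    IsCompactOperator.image_closedBall_subset_compact (f := T.toLinearMap) hT 1
  obtain ⟨t, -, ht, hcover⟩ := hC.finite_cover_balls hε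
  have : FiniteDimensional 𝕜 (Submodule.span 𝕜 t) := .span_of_finite 𝕜 ht
  refine ⟨Submodule.span 𝕜 t, this,
    ContinuousLinearMap.opNorm_le_of_unit_norm hε.le fun x hx => ?_⟩
  obtain ⟨y, hy, hxy⟩ := Set.mem_iUnion₂.1 <| hcover <| hTC ⟨x, by simp [hx], rfl⟩
  calc ‖T x - (Submodule.span 𝕜 t).starProjection (T x)‖
      = ⨅ z : Submodule.span 𝕜 t, ‖T x - z‖ := Submodule.starProjection_minimal _
    _ ≤ ‖T x - y‖ :=
        ciInf_le ⟨0, Set.forall_mem_range.2 fun _ => norm_nonneg _⟩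
          (⟨y, Submodule.subset_span hy⟩ : Submodule.span 𝕜 t)
    _ ≤ ε := (mem_ball_iff_norm.1 hxy).le

theorem mem_of_isCompactOperator_of_rankOne_mem [CompleteSpace E] [CompleteSpace G]
    {M : Submodule 𝕜 (E →L[𝕜] G)} (hM : IsClosed (M : Set (E →L[𝕜] G)))
    (hrank : ∀ x y, rankOne 𝕜 x y ∈ M) {T : E →L[𝕜] G} (hT : IsCompactOperator T) : T ∈ M := by
  refine hM.closure_subset <| Metric.mem_closure_iff.2 fun ε hε => ?_
  obtain ⟨U, _, hU⟩ := exists_finiteDimensional_norm_sub_starProjection_comp_le hT (half_pos hε)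
  refine ⟨U.starProjection ∘L T, ?_, ?_⟩
  · rw [(stdOrthonormalBasis 𝕜 U).starProjection_eq_sum_rankOne,
      ContinuousLinearMap.finsetSum_comp]
    exact sum_mem fun i _ => by rw [rankOne_comp]; exact hrank _ _
  · rw [dist_eq_norm]
    exact hU.trans_lt (half_lt_self hε)

end CompactOperator

section HilbertSpace

open TopologicalSpace

variable {𝕜 E : Type*} [RCLike 𝕜] [NormedAddCommGroup E] [InnerProductSpace 𝕜 E]

theorem countable_of_orthonormal [SeparableSpace E] {ι : Type*} {b : ι → E}
    (hb : Orthonormal 𝕜 b) : Countable ι := by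
  have hdist : Pairwise fun i j => 1 < dist (b i) (b j) := fun i j hij => by
    have hsq := norm_sub_sq (𝕜 := 𝕜) (b i) (b j)
    rw [hb.1, hb.1, hb.2 hij, map_zero] at hsq
    simp only [dist_eq_norm]
    nlinarith [norm_nonneg (b i - b j)]
  exact Pairwise.countable_of_isOpen_disjoint (s := fun i => Metric.ball (b i) (1 / 2))
    (fun i j hij => Metric.ball_disjoint_ball (by linarith [hdist hij]))
    (fun i => Metric.isOpen_ball) fun i => ⟨b i, Metric.mem_ball_self (by norm_num)⟩

theorem nonempty_linearIsometryEquiv_lp [CompleteSpace E] [SeparableSpace E]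
    (hE : ¬ FiniteDimensional 𝕜 E) : Nonempty (E ≃ₗᵢ[𝕜] lp (fun _ : ℕ => 𝕜) 2) := by
  obtain ⟨w, b, -⟩ := exists_hilbertBasis 𝕜 E
  have : Countable w := countable_of_orthonormal b.orthonormal
  have : Infinite w := not_finite_iff_infinite.1 fun _ => hE <| by
    have := Fintype.ofFinite w
    exact b.toOrthonormalBasis.toBasis.finiteDimensional_of_finite
  obtain ⟨e⟩ : Nonempty (ℕ ≃ w) := nonempty_equiv_of_countable
  refine ⟨(HilbertBasis.mk (b.orthonormal.comp e e.injective) ?_).repr⟩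
  rw [e.surjective.range_comp, b.dense_span]

end HilbertSpace

section Simple

open scoped CStarAlgebra

variable {A : Type*} [NonUnitalCStarAlgebra A]

theorem IsSimpleCStarAlgebra.mem_of_isClosed (hA : IsSimpleCStarAlgebra A) {I : AddSubgroup A}
    (hI : IsClosed (I : Set A)) (hleft : ∀ a, ∀ x ∈ I, a * x ∈ I)
    (hright : ∀ a, ∀ x ∈ I, x * a ∈ I) {x : A} (hx : x ∈ I) (hx0 : x ≠ 0) (a : A) : a ∈ I := by
  let J : TwoSidedIdeal A := .mk' I I.zero_mem I.add_mem I.neg_mem (hleft _ _) (hright _ _)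
  have hJ : ∀ y, y ∈ J ↔ y ∈ I := fun y => TwoSidedIdeal.mem_mk' ..
  rcases hA J (by rwa [show (J : Set A) = I from Set.ext hJ]) with h | h
  · exact absurd ((TwoSidedIdeal.mem_bot A).1 (h ▸ (hJ x).2 hx)) hx0
  · exact (hJ a).1 (h ▸ trivial)

theorem IsSimpleCStarAlgebra.exists_mul_mul_ne_zero (hA : IsSimpleCStarAlgebra A) {a b : A}
    (ha : a ≠ 0) (hb : b ≠ 0) : ∃ x, a * x * b ≠ 0 := by
  by_contra! hab
  let I : AddSubgroup A := ⨅ x, (AddMonoidHom.mulLeft (a * x)).ker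
  have mem_I : ∀ y, y ∈ I ↔ ∀ x, a * x * y = 0 := fun y => by
    simp [I, AddSubgroup.mem_iInf, AddMonoidHom.mem_ker]
  have hI : IsClosed (I : Set A) := by
    rw [show (I : Set A) = {y | ∀ x, a * x * y = 0} from Set.ext mem_I, Set.ofPred_forall]
    exact isClosed_iInter fun x => isClosed_eq (by fun_prop) (by fun_prop)
  have haI : ∀ y, a * star a * y = 0 := fun y => (mem_I y).1
    (hA.mem_of_isClosed hI
      (fun c y hy => (mem_I _).2 fun x => by rw [← mul_assoc, mul_assoc a, (mem_I y).1 hy])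
      (fun c y hy => (mem_I _).2 fun x => by rw [← mul_assoc, (mem_I y).1 hy, zero_mul])
      ((mem_I b).2 hab) hb y) (star a)
  have haa : a * star a = 0 := (CStarRing.mul_star_self_eq_zero_iff _).1 <| by
    rw [star_mul, star_star, haI]
  exact ha ((CStarRing.mul_star_self_eq_zero_iff a).1 haa)

variable {B : Type*} [NonUnitalCStarAlgebra B]

theorem IsSimpleCStarAlgebra.injective (hA : IsSimpleCStarAlgebra A) (π : A →⋆ₙₐ[ℂ] B) {a : A}
    (ha : π a ≠ 0) : Function.Injective π := by
  refine (injective_iff_map_eq_zero π).2 fun x hx => by_contra fun hx0 => ha ?_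
  have hπ : Continuous π := map_continuous π
  exact hA.mem_of_isClosed (I := (π : A →+ B).ker)
    (isClosed_singleton.preimage hπ)
    (fun c y hy => by simp_all [AddMonoidHom.mem_ker])
    (fun c y hy => by simp_all [AddMonoidHom.mem_ker]) hx hx0 a

end Simple

section IrreducibleRepresentation

open InnerProductSpace TopologicalSpace
open scoped CStarAlgebra

variable {A : Type*} [NonUnitalCStarAlgebra A] {E : Type*} [NormedAddCommGroup E]
  [InnerProductSpace ℂ E] [CompleteSpace E] {π : A →⋆ₙₐ[ℂ] (E →L[ℂ] E)}

theorem rankOne_mem_range_of_denseRange (hπ : Function.Injective π) {ι : Type*} {v : ι → E}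
    (hv : DenseRange v) (hrank : ∀ i j, rankOne ℂ (v i) (v j) ∈ Set.range π) (x y : E) :
    rankOne ℂ x y ∈ Set.range π :=
  hv.induction_on₂ ((NonUnitalStarAlgHom.isometry π hπ).isClosedEmbedding.isClosed_range.preimage
    (f := fun q : E × E => rankOne ℂ q.1 q.2) (by simp only [rankOne_def]; fun_prop)) hrank x y

theorem separableSpace_of_rankOne_mem_range [SeparableSpace A] [Nontrivial E]
    (hrank : ∀ x y, rankOne ℂ x y ∈ Set.range π) : SeparableSpace E := by
  obtain ⟨e, he⟩ := exists_ne (0 : E)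
  have hsurj : Function.Surjective fun a => π a e := fun x => by
    obtain ⟨a, ha⟩ := hrank ((inner ℂ e e)⁻¹ • x) e
    refine ⟨a, ?_⟩
    simp only [ha, rankOne_apply]
    rw [smul_inv_smul₀ (inner_self_ne_zero.2 he)]
  exact hsurj.denseRange.separableSpace
    ((map_continuous π).clm_apply continuous_const)

theorem range_eq_compactOperator (hA : IsSimpleCStarAlgebra A)
    (hπ : Function.Injective π) (hrank : ∀ x y, rankOne ℂ x y ∈ Set.range π) :
    Set.range π = compactOperator (RingHom.id ℂ) E E := by
  have hclosed := (NonUnitalStarAlgHom.isometry π hπ).isClosedEmbedding.isClosed_range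
  refine Set.Subset.antisymm (Set.range_subset_iff.2 fun a => ?_) fun T hT =>
    mem_of_isCompactOperator_of_rankOne_mem (M := LinearMap.range (π : A →ₗ[ℂ] E →L[ℂ] E))
      hclosed hrank hT
  rcases subsingleton_or_nontrivial E with _ | _
  · exact Subsingleton.elim 0 (π a) ▸ isCompactOperator_zero
  obtain ⟨e, he⟩ := exists_ne (0 : E)
  obtain ⟨x, hx⟩ := hrank e e
  have hx0 : x ≠ 0 := by
    rintro rfl
    exact rankOne_ne_zero (𝕜 := ℂ) he he (by rw [← hx, map_zero])
  exact hA.mem_of_isClosed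
    (I := (compactOperator (RingHom.id ℂ) E E).toAddSubgroup.comap (π : A →+ E →L[ℂ] E))
    (isClosed_setOfPred_isCompactOperator.preimage (map_continuous π))
    (fun c y hy => show IsCompactOperator (π (c * y)) from
      map_mul π c y ▸ IsCompactOperator.clm_comp hy (π c))
    (fun c y hy => show IsCompactOperator (π (y * c)) from
      map_mul π y c ▸ IsCompactOperator.comp_clm hy (π c))
    (hx.symm ▸ isCompactOperator_rankOne e e : IsCompactOperator (π x)) hx0 a

theorem nonempty_equiv_compactOperators (hA : IsSimpleCStarAlgebra A)
    {π : A →⋆ₙₐ[ℂ] (H →L[ℂ] H)} (hπ : Function.Injective π)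
    (hrank : ∀ x y, rankOne ℂ x y ∈ Set.range π) : Nonempty (A ≃L[ℂ] CompactOperators) := by
  have hrange : Set.range π = CompactOperators := range_eq_compactOperator hA hπ hrank
  let f : A →ₗᵢ[ℂ] CompactOperators :=
    { (π : A →ₗ[ℂ] H →L[ℂ] H).codRestrict CompactOperators fun a =>
        hrange.subset (Set.mem_range_self a)
      with norm_map' := NonUnitalStarAlgHom.norm_map π hπ }
  have hf : Function.Surjective f := fun T =>
    (hrange.superset T.2).imp fun _ => Subtype.ext
  exact ⟨(LinearIsometryEquiv.ofSurjective f hf).toContinuousLinearEquiv⟩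

theorem nonempty_equiv_compactOperators_of_denseRange [SeparableSpace A]
    (hA : IsSimpleCStarAlgebra A) (hAinf : ¬ FiniteDimensional ℂ A) {ι : Type*} {v : ι → E}
    (hv : DenseRange v) {i : ι} (hi : v i ≠ 0)
    (hrank : ∀ i j, rankOne ℂ (v i) (v j) ∈ Set.range π) :
    Nonempty (A ≃L[ℂ] CompactOperators) := by
  have : Nontrivial E := ⟨v i, 0, hi⟩
  obtain ⟨a, ha⟩ := hrank i i
  have hπ : Function.Injective π := hA.injective π (a := a) (ha ▸ rankOne_ne_zero hi hi)
  have hrank := rankOne_mem_range_of_denseRange hπ hv hrank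
  have : SeparableSpace E := separableSpace_of_rankOne_mem_range hrank
  have hE : ¬ FiniteDimensional ℂ E := fun _ =>
    hAinf <| .of_injective (π : A →ₗ[ℂ] E →L[ℂ] E) hπ
  obtain ⟨e⟩ := nonempty_linearIsometryEquiv_lp hE
  refine nonempty_equiv_compactOperators hA
    (π := e.conjStarAlgEquiv.toNonUnitalStarAlgHom.comp π)
    (e.conjStarAlgEquiv.injective.comp hπ) fun x y => ?_
  obtain ⟨b, hb⟩ := hrank (e.symm x) (e.symm y)
  refine ⟨b, ?_⟩
  ext1 z
  simp [hb, LinearIsometryEquiv.inner_map_eq_flip]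

end IrreducibleRepresentation

section GNS

open InnerProductSpace TopologicalSpace
open scoped ComplexOrder

variable {A : Type*} [NonUnitalCStarAlgebra A] {p : A}

namespace IsMinimalProjection

theorem mul_mul_eq_coeff_smul (hp : IsMinimalProjection (⊤ : NonUnitalStarSubalgebra ℂ A) p)
    (x : A) : p * x * p = coeff p (p * x * p) • p := by
  obtain ⟨c, hc⟩ := hp.exists_smul x trivial
  rw [hc, map_smul, coeff_self hp.ne_zero, smul_eq_mul, mul_one]

variable [PartialOrder A] [StarOrderedRing A]

/-- The pure state `x ↦ c`, where `p * x * p = c • p`, defined by a minimal projection `p`. -/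
def state (hp : IsMinimalProjection (⊤ : NonUnitalStarSubalgebra ℂ A) p) : A →ₚ[ℂ] ℂ :=
  .mk₀ ((coeff p).toLinearMap ∘ₗ LinearMap.mulLeftRight ℂ (p, p)) fun x hx => by
    obtain ⟨y, rfl⟩ := CStarAlgebra.nonneg_iff_eq_star_mul_self.1 hx
    obtain ⟨r, hr, hyr⟩ := exists_nonneg_of_star_mul_self_eq_smul hp.toIsStarProjection hp.ne_zero
      (y := y * p) <| by
        rw [star_mul, hp.isSelfAdjoint.star_eq, ← mul_assoc, mul_assoc p, hp.mul_mul_eq_coeff_smul]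
    simpa [hyr] using hr

theorem mul_mul_eq_state_smul (hp : IsMinimalProjection (⊤ : NonUnitalStarSubalgebra ℂ A) p)
    (x : A) : p * x * p = hp.state x • p :=
  hp.mul_mul_eq_coeff_smul x

theorem toPreGNS_mul_self (hp : IsMinimalProjection (⊤ : NonUnitalStarSubalgebra ℂ A) p) (x : A) :
    (hp.state.toPreGNS (x * p) : hp.state.GNS) = hp.state.toPreGNS x := by
  have hzero : hp.state (star (x * p - x) * (x * p - x)) = 0 :=
    smul_left_injective ℂ hp.ne_zero <| by
      simp only [← hp.mul_mul_eq_state_smul, zero_smul]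
      rw [mul_assoc, mul_assoc, sub_mul, mul_assoc x, hp.isIdempotentElem.eq, sub_self, mul_zero,
        mul_zero]
  rw [← sub_eq_zero, ← UniformSpace.Completion.coe_sub, ← norm_eq_zero,
    UniformSpace.Completion.norm_coe, ← map_sub, PositiveLinearMap.preGNS_norm_def,
    PositiveLinearMap.ofPreGNS_toPreGNS, hzero, Complex.zero_re, Real.sqrt_zero]

theorem gns_mul_mul_star (hp : IsMinimalProjection (⊤ : NonUnitalStarSubalgebra ℂ A) p)
    (a b : A) : hp.state.gnsNonUnitalStarAlgHom (a * p * star b) =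
      rankOne ℂ (hp.state.toPreGNS a : hp.state.GNS) (hp.state.toPreGNS b : hp.state.GNS) := by
  have hmul (c : A) : a * p * star b * c * p = hp.state (star b * c) • (a * p) := by
    rw [← mul_smul_comm, ← hp.mul_mul_eq_state_smul]
    simp only [mul_assoc]
  ext1 z
  induction z using UniformSpace.Completion.induction_on with
  | hp => exact isClosed_eq (by fun_prop) (by fun_prop)
  | ih c =>
    obtain ⟨c, rfl⟩ := hp.state.toPreGNS.surjective c
    rw [PositiveLinearMap.gnsNonUnitalStarAlgHom_apply_coe,
      PositiveLinearMap.leftMulMapPreGNS_apply, PositiveLinearMap.ofPreGNS_toPreGNS,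
      ← hp.toPreGNS_mul_self, hmul, map_smul, UniformSpace.Completion.coe_smul,
      hp.toPreGNS_mul_self, rankOne_apply, UniformSpace.Completion.inner_coe,
      PositiveLinearMap.preGNS_inner_def]
    rfl

end IsMinimalProjection

theorem nonempty_equiv_compactOperators_of_isMinimalProjection [SeparableSpace A]
    (hA : IsSimpleCStarAlgebra A) (hAinf : ¬ FiniteDimensional ℂ A)
    (hp : IsMinimalProjection (⊤ : NonUnitalStarSubalgebra ℂ A) p) :
    Nonempty (A ≃L[ℂ] CompactOperators) := by
  let _ := CStarAlgebra.spectralOrder A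
  let _ := CStarAlgebra.spectralOrderedRing A
  have hdense : DenseRange fun a => (hp.state.toPreGNS a : hp.state.GNS) :=
    UniformSpace.Completion.denseRange_coe.comp hp.state.toPreGNS.surjective.denseRange
      (UniformSpace.Completion.continuous_coe _)
  have hp1 : hp.state p = 1 := smul_left_injective ℂ hp.ne_zero <| by
    simp only [← hp.mul_mul_eq_state_smul, one_smul, hp.isIdempotentElem.eq]
  have hp0 : (hp.state.toPreGNS p : hp.state.GNS) ≠ 0 := by
    rw [← norm_ne_zero_iff, UniformSpace.Completion.norm_coe, PositiveLinearMap.preGNS_norm_def,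
      PositiveLinearMap.ofPreGNS_toPreGNS, hp.isSelfAdjoint.star_eq, hp.isIdempotentElem.eq, hp1]
    simp
  exact nonempty_equiv_compactOperators_of_denseRange hA hAinf hdense hp0
    fun a b => ⟨a * p * star b, hp.gns_mul_mul_star a b⟩

end GNS

section AF

open TopologicalSpace

variable {A : Type*} [NonUnitalCStarAlgebra A] {S : ℕ → NonUnitalStarSubalgebra ℂ A}

theorem IsAFPresentation.separableSpace (hS : IsAFPresentation A S) : SeparableSpace A := by
  obtain ⟨-, hfd, hdense⟩ := hS
  rw [← isSeparable_univ_iff, ← hdense.closure_eq]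
  refine (IsSeparable.iUnion fun k => ?_).closure
  have := FiniteDimensional.proper ℂ (S k)
  exact .of_subtype _

theorem IsAFPresentation.exists_isMinimalProjection [Nontrivial A] (hS : IsAFPresentation A S) :
    ∃ m q, IsMinimalProjection (S m) q := by
  obtain ⟨-, hfd, hdense⟩ := hS
  obtain ⟨x, hx0, hx⟩ := hdense.inter_open_nonempty {0}ᶜ isOpen_compl_singleton
    (exists_ne (0 : A))
  obtain ⟨m, hm⟩ := Set.mem_iUnion.1 hx
  have := hfd m
  exact ⟨m, _root_.exists_isMinimalProjection hm hx0⟩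

end AF

theorem IsAFPresentation.hasLargeCorners {A : Type*} [NonUnitalCStarAlgebra A]
    {S : ℕ → NonUnitalStarSubalgebra ℂ A} (hS : IsAFPresentation A S)
    (hA : IsSimpleCStarAlgebra A)
    (hmin : ¬ ∃ p, IsMinimalProjection (⊤ : NonUnitalStarSubalgebra ℂ A) p) :
    HasLargeCorners S := by
  obtain ⟨hmono, hfin, hdense⟩ := hS
  exact hasLargeCorners_of_not_isMinimalProjection_top hmono hdense
    (fun _ _ _ _ _ ha hb => hA.exists_mul_mul_ne_zero ha hb) fun _ Q _ hQ => hmin ⟨Q, hQ⟩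

theorem nonempty_equiv_of_hasLargeCorners {X Y : Type*} [NonUnitalCStarAlgebra X] [Nontrivial X]
    [NonUnitalCStarAlgebra Y] [Nontrivial Y] {S : ℕ → NonUnitalStarSubalgebra ℂ X}
    {T : ℕ → NonUnitalStarSubalgebra ℂ Y} (hS : IsAFPresentation X S) (hSc : HasLargeCorners S)
    (hT : IsAFPresentation Y T) (hTc : HasLargeCorners T) : Nonempty (X ≃L[ℂ] Y) := by
  obtain ⟨_, _, hp⟩ := hS.exists_isMinimalProjection
  obtain ⟨_, _, hq⟩ := hT.exists_isMinimalProjection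
  exact IsComplementedIn.nonempty_equiv
    (isComplementedIn_of_hasLargeCorners hS hT.1 hT.2.2 hTc hq)
    (isComplementedIn_of_hasLargeCorners hT hS.1 hS.2.2 hSc hp)
    (isComplementedIn_of_hasLargeCorners hT.c0 hT.1 hT.2.2 hTc hq)

theorem nontrivial_of_starAlgEquiv_matrix {F : Type*} [CStarAlgebra F] {n : Type*} [Nonempty n]
    [Fintype n] {B : StarSubalgebra ℂ F} (e : B ≃⋆ₐ[ℂ] Matrix n n ℂ) : Nontrivial F :=
  have : Nontrivial B := e.toEquiv.nontrivial
  Subtype.val_injective.nontrivial (α := B)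

theorem simple_af_linearly_homeomorphic_compacts_or_fermion_general
    (A : Type*) [NonUnitalCStarAlgebra A]
    (hA : ∃ SA : ℕ → NonUnitalStarSubalgebra ℂ A, IsAFPresentation A SA)
    (hAsimple : IsSimpleCStarAlgebra A)
    (hAinf : ¬ FiniteDimensional ℂ A)
    (F : Type*) [CStarAlgebra F]
    (S : ℕ → StarSubalgebra ℂ F)
    (d : ℕ → ℕ) (hd : StrictMono d)
    (hmono : Monotone S)
    (hiso : ∀ k, Nonempty (S k ≃⋆ₐ[ℂ] Matrix (Fin (d k)) (Fin (d k)) ℂ))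
    (hdense : Dense (⋃ k, (S k : Set F))) :
    Nonempty (A ≃L[ℂ] CompactOperators) ∨ Nonempty (A ≃L[ℂ] F) := by
  obtain ⟨SA, hSA⟩ := hA
  have : Nontrivial A := by
    by_contra hA0
    have := not_nontrivial_iff_subsingleton.1 hA0
    exact hAinf inferInstance
  by_cases hmin : ∃ p, IsMinimalProjection (⊤ : NonUnitalStarSubalgebra ℂ A) p
  · obtain ⟨p, hp⟩ := hmin
    have := hSA.separableSpace
    exact .inl (nonempty_equiv_compactOperators_of_isMinimalProjection hAsimple hAinf hp)
  · have : Nonempty (Fin (d 1)) := Fin.pos_iff_nonempty.1 ((hd one_pos).pos)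
    have : Nontrivial F := nontrivial_of_starAlgEquiv_matrix (hiso 1).some
    exact .inr <| nonempty_equiv_of_hasLargeCorners hSA (hSA.hasLargeCorners hAsimple hmin)
      (isAFPresentation_of_starAlgEquiv_matrix hmono hiso hdense)
      (hasLargeCorners_of_starAlgEquiv_matrix hd hmono hiso hdense)

theorem simple_af_linearly_homeomorphic_compacts_or_fermion
    (A : Type*) [NonUnitalCStarAlgebra A]
    (hA : ∃ SA : ℕ → NonUnitalStarSubalgebra ℂ A, IsAFPresentation A SA)
    (hAsimple : IsSimpleCStarAlgebra A)
    (hAinf : ¬ FiniteDimensional ℂ A)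
    (F : Type*) [CStarAlgebra F]
    (S : ℕ → StarSubalgebra ℂ F)
    (hmono : Monotone S)
    (hiso : ∀ k, Nonempty ((S k) ≃⋆ₐ[ℂ] Matrix (Fin (2 ^ k)) (Fin (2 ^ k)) ℂ))
    (hdense : Dense (⋃ k, (S k : Set F))) :
    Nonempty (A ≃L[ℂ] ↥CompactOperators) ∨ Nonempty (A ≃L[ℂ] F) :=
  simple_af_linearly_homeomorphic_compacts_or_fermion_general A hA hAsimple hAinf F S (2 ^ ·)
    (pow_right_strictMono₀ one_lt_two) hmono hiso hdense
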